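/- arXiv:1508.04457 — 2 statements merged into one kernel-verified Lean document; each statement's English description precedes it below -/
import Mathlib

section
/- Let f(z) = Σ_{p odd prime} z^p for real 0 < z < 1. Then f(z) ~ 1/((1−z)·log(1/(1−z))) as z → 1⁻, i.e., the ratio f(z)·(1−z)·log(1/(1−z)) tends to 1 as z → 1 from below. -/
open Filter Topology Asymptotics MeasureTheory

/-- `Q2 k` is the number of Goldbach partitions of `2*k`, i.e. the number of
unordered pairs `{p, q}` of odd primes with `p + q = 2*k`. -/
def Q2 (k : ℕ) : ℕ :=
  ((Finset.range (2 * k + 1) ×ˢ Finset.range (2 * k + 1)).filter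
    (fun pq => pq.1.Prime ∧ pq.2.Prime ∧ Odd pq.1 ∧ Odd pq.2 ∧
      pq.1 ≤ pq.2 ∧ pq.1 + pq.2 = 2 * k)).card

/-- `fOdd z = Σ_{p odd prime} z^p`. -/
noncomputable def fOdd (z : ℝ) : ℝ := ∑' p : ℕ, if p.Prime ∧ Odd p then z ^ p else 0

/-- `fOdd' z = Σ_{p odd prime} p * z^(p-1)`, the derivative of `fOdd` on `(0,1)`. -/
noncomputable def fOdd' (z : ℝ) : ℝ :=
  ∑' p : ℕ, if p.Prime ∧ Odd p then (p : ℝ) * z ^ (p - 1) else 0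

/-- `fOdd'' z = Σ_{p odd prime} p * (p-1) * z^(p-2)`, the second derivative of `fOdd` on `(0,1)`. -/
noncomputable def fOdd'' (z : ℝ) : ℝ :=
  ∑' p : ℕ, if p.Prime ∧ Odd p then (p : ℝ) * ((p : ℝ) - 1) * z ^ (p - 2) else 0

/-- The prime-counting function at a real argument: the number of primes `≤ y`. -/
noncomputable def primePi (y : ℝ) : ℕ := Nat.primeCounting ⌊y⌋₊

/-!
Suppose the Laplace transform of a bounded `u` extends continuously to the line `re s = 0`. Against
the Fourier transform of a compactly supported `g`, Parseval turns `∫ u (x + y) ĝ y` into a Fourier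
integral of `G (2πiξ) g ξ`, which vanishes as `x → ∞` by the Riemann–Lebesgue lemma. Averaging over
small dilates of one such kernel of mass one moves any integrable kernel by little in `L¹`, so
`∫ u (x + v) K v → 0` for every integrable `K`.

Take for `u` the error in `e⁻ʸ ∑_{n ≤ eʸ} Λ(n) 1_{n ≡ a}`, for which the continuous extension is the
nonvanishing of Dirichlet `L`-functions on `re s = 1`, and for `K` the kernel `e²ᵛ exp (-eᵛ)`, which
turns the partial sums into the power series: `(1 - z) ∑ Λ(n) 1_{n ≡ a} zⁿ → 1 / φ(q)`. Proper prime
powers do not matter, as `∑ Λ(n) / n` over them converges. The weight `log p` is removed by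
comparing it with `L = log (1 / (1 - z))`: `log n ≤ L + n (1 - z)` for every `n`, and
`log n ≥ L - 2 log L` except for the `n < 1 / ((1 - z) L²)`, which are too few to count.
-/

open scoped FourierTransform Real

lemma continuous_integral_norm_translate_sub {X E : Type*} [AddGroup X] [TopologicalSpace X]
    [IsTopologicalAddGroup X] [MeasurableSpace X] [BorelSpace X] [NormedAddCommGroup E]
    {μ : Measure X} [IsLocallyFiniteMeasure μ] [μ.InnerRegularCompactLTTop]
    [μ.IsAddLeftInvariant] {K : X → E} (hK : Integrable K μ) :
    Continuous fun h => ∫ v, ‖K (h + v) - K v‖ ∂μ := by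
  have hK1 : MemLp K 1 μ := memLp_one_iff_integrable.2 hK
  have : Fact ((1 : ENNReal) ≠ ⊤) := ⟨ENNReal.one_ne_top⟩
  have hact : Continuous fun h : X => DomAddAct.mk h +ᵥ hK1.toLp K :=
    (continuous_id.vadd continuous_const).comp DomAddAct.continuous_mk
  refine (hact.sub (continuous_const (y := hK1.toLp K))).norm.congr fun h => ?_
  have hKh : MemLp (fun v => K (h + v)) 1 μ :=
    hK1.comp_measurePreserving (measurePreserving_add_left μ h)
  rw [Pi.sub_apply, DomAddAct.mk_vadd_toLp, ← MemLp.toLp_sub, L1.norm_eq_integral_norm]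
  refine integral_congr_ae ?_
  filter_upwards [(hKh.sub hK1).coeFn_toLp] with v hv using congrArg norm hv

/-- The Tauberian condition on `u`: it is bounded, supported in `[0, ∞)`, and its Laplace transform
extends continuously from the open right half-plane to the function `G` on the closed one. For
convenience `u` vanishes at `0` as well, and `G` is unconstrained for `re s < 0`. -/
structure HasContinuousLaplaceExtension (u : ℝ → ℂ) (G : ℂ → ℂ) : Prop where
  measurable : Measurable u
  bounded : ∃ M, ∀ y, ‖u y‖ ≤ M
  eq_zero_of_nonpos : ∀ y ≤ 0, u y = 0
  continuousOn : ContinuousOn G {s | 0 ≤ s.re}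
  laplace : ∀ s : ℂ, 0 < s.re → ∫ y, u y * Complex.exp (-s * y) = G s

namespace HasContinuousLaplaceExtension

variable {u g : ℝ → ℂ} {G : ℂ → ℂ}

lemma integrable_mul_exp (h : HasContinuousLaplaceExtension u G) {s : ℂ} (hs : 0 < s.re) :
    Integrable fun y : ℝ => u y * Complex.exp (-s * y) := by
  obtain ⟨M, hM⟩ := h.bounded
  have hexp : IntegrableOn (fun y : ℝ => M * Real.exp (-s.re * y)) (Set.Ioi 0) :=
    (integrableOn_exp_mul_Ioi (neg_lt_zero.2 hs) 0).const_mul M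
  refine (integrableOn_iff_integrable_of_support_subset fun y hy => ?_).1
    (hexp.mono' (h.measurable.mul (by fun_prop)).aestronglyMeasurable <| ae_of_all _ fun y => ?_)
  · by_contra hy0
    exact hy (by simp [h.eq_zero_of_nonpos y (not_lt.1 hy0)])
  · have hre : (-s * (y : ℂ)).re = -s.re * y := by simp
    rw [norm_mul, Complex.norm_exp, hre]
    exact mul_le_mul_of_nonneg_right (hM y) (Real.exp_nonneg _)

lemma fourier_mul_exp (h : HasContinuousLaplaceExtension u G) {δ : ℝ} (hδ : 0 < δ) (ξ : ℝ) :
    𝓕 (fun y : ℝ => u y * Complex.exp (-δ * y)) ξ = G (δ + 2 * π * ξ * Complex.I) := by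
  rw [← h.laplace _ (by simpa using hδ), Real.fourier_real_eq_integral_exp_smul]
  refine integral_congr_ae (ae_of_all _ fun y => ?_)
  simp only [smul_eq_mul]
  rw [mul_left_comm, ← Complex.exp_add]
  push_cast
  ring_nf

lemma integral_mul_exp_mul_fourier (h : HasContinuousLaplaceExtension u G) (hg : Integrable g)
    {δ : ℝ} (hδ : 0 < δ) :
    ∫ y, u y * Complex.exp (-δ * y) * 𝓕 g y = ∫ ξ : ℝ, G (δ + 2 * π * ξ * Complex.I) * g ξ := by
  have hint : Integrable fun y : ℝ => u y * Complex.exp (-δ * y) :=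
    h.integrable_mul_exp (by simpa using hδ)
  have hflip := VectorFourier.integral_fourierIntegral_smul_eq_flip (L := innerₗ ℝ)
    Real.continuous_fourierChar continuous_inner hint hg
  simp only [smul_eq_mul, flip_innerₗ] at hflip
  simp_rw [← h.fourier_mul_exp hδ]
  exact hflip.symm

lemma tendsto_integral_mul_exp_mul_fourier (h : HasContinuousLaplaceExtension u G)
    (hFg : Integrable (𝓕 g)) :
    Tendsto (fun δ : ℝ => ∫ y, u y * Complex.exp (-δ * y) * 𝓕 g y) (𝓝[>] 0)
      (𝓝 (∫ y, u y * 𝓕 g y)) := by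
  obtain ⟨M, hM⟩ := h.bounded
  refine tendsto_integral_filter_of_dominated_convergence (fun y => M * ‖𝓕 g y‖) ?_ ?_
    (hFg.norm.const_mul M) ?_
  · exact Eventually.of_forall fun δ =>
      (h.measurable.mul (by fun_prop)).aestronglyMeasurable.mul hFg.aestronglyMeasurable
  · filter_upwards [self_mem_nhdsWithin] with δ hδ
    refine ae_of_all _ fun y => ?_
    rw [norm_mul]
    refine mul_le_mul_of_nonneg_right ?_ (norm_nonneg _)
    rcases le_or_gt y 0 with hy | hy
    · simpa [h.eq_zero_of_nonpos y hy] using (norm_nonneg _).trans (hM 0)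
    · have hexp : ‖Complex.exp (-δ * y)‖ ≤ 1 := by
        rw [Complex.norm_exp, Real.exp_le_one_iff]
        simpa using (mul_pos hδ hy).le
      rw [norm_mul]
      exact (mul_le_of_le_one_right (norm_nonneg _) hexp).trans (hM y)
  · refine ae_of_all _ fun y => ?_
    have hcont : Continuous fun δ : ℝ => u y * Complex.exp (-δ * y) * 𝓕 g y := by fun_prop
    simpa using (hcont.tendsto 0).mono_left nhdsWithin_le_nhds

lemma tendsto_integral_boundary (h : HasContinuousLaplaceExtension u G) (hg : Continuous g)
    (hgs : HasCompactSupport g) :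
    Tendsto (fun δ : ℝ => ∫ ξ : ℝ, G (δ + 2 * π * ξ * Complex.I) * g ξ) (𝓝[>] 0)
      (𝓝 (∫ ξ : ℝ, G (2 * π * ξ * Complex.I) * g ξ)) := by
  have hmem (p : ℝ × ℝ) (hp : p ∈ Set.Ici 0 ×ˢ Set.univ) :
      0 ≤ ((p.1 : ℂ) + 2 * π * p.2 * Complex.I).re := by
    simpa using hp.1
  have hG : ContinuousOn (fun p : ℝ × ℝ => G (p.1 + 2 * π * p.2 * Complex.I) * g p.2)
      (Set.Ici 0 ×ˢ Set.univ) :=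
    (h.continuousOn.comp (by fun_prop) hmem).mul (by fun_prop)
  have hint : ContinuousOn (fun δ : ℝ => ∫ ξ : ℝ, G (δ + 2 * π * ξ * Complex.I) * g ξ)
      (Set.Ici 0) :=
    continuousOn_integral_of_compact_support hgs.isCompact hG fun δ ξ _ hξ => by
      simp [image_eq_zero_of_notMem_tsupport hξ]
  simpa using (hint 0 Set.self_mem_Ici).mono_left (nhdsWithin_mono _ Set.Ioi_subset_Ici_self)

lemma integral_mul_fourier (h : HasContinuousLaplaceExtension u G) (hg : Continuous g)
    (hgs : HasCompactSupport g) (hFg : Integrable (𝓕 g)) :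
    ∫ y, u y * 𝓕 g y = ∫ ξ : ℝ, G (2 * π * ξ * Complex.I) * g ξ := by
  refine tendsto_nhds_unique (h.tendsto_integral_mul_exp_mul_fourier hFg)
    ((h.tendsto_integral_boundary hg hgs).congr' ?_)
  filter_upwards [self_mem_nhdsWithin] with δ hδ
  exact (h.integral_mul_exp_mul_fourier (hg.integrable_of_hasCompactSupport hgs) hδ).symm

theorem tendsto_integral_mul_fourier (h : HasContinuousLaplaceExtension u G) (hg : Continuous g)
    (hgs : HasCompactSupport g) (hFg : Integrable (𝓕 g)) :
    Tendsto (fun x => ∫ y, u (x + y) * 𝓕 g y) atTop (𝓝 0) := by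
  have hshift (x : ℝ) : ∫ y, u (x + y) * 𝓕 g y =
      𝓕 (fun ξ : ℝ => G (2 * π * ξ * Complex.I) * g ξ) (-x) := by
    have hch : Continuous fun ξ => 𝐞 (x * ξ) • g ξ := by fun_prop
    have hFch : 𝓕 (fun ξ => 𝐞 (x * ξ) • g ξ) = fun y => 𝓕 g (y - x) := by
      ext y
      simp only [Real.fourier_real_eq, ← mul_smul, ← AddChar.map_add_eq_mul]
      congr 1 with ξ
      ring_nf
    calc ∫ y, u (x + y) * 𝓕 g y
        = ∫ y, u y * 𝓕 (fun ξ => 𝐞 (x * ξ) • g ξ) y := by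
          simpa only [hFch, add_sub_cancel_left] using
            integral_add_left_eq_self (fun y => u y * 𝓕 g (y - x)) x
      _ = ∫ ξ : ℝ, G (2 * π * ξ * Complex.I) * (𝐞 (x * ξ) • g ξ) :=
          h.integral_mul_fourier hch hgs.smul_left (hFch ▸ hFg.comp_sub_right x)
      _ = 𝓕 (fun ξ : ℝ => G (2 * π * ξ * Complex.I) * g ξ) (-x) := by
          simp only [Real.fourier_real_eq, Circle.smul_def, smul_eq_mul]
          congr 1 with ξ
          ring_nf
  simp_rw [hshift]
  refine (Real.zero_at_infty_fourier _).comp ?_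
  exact tendsto_neg_atTop_atBot.mono_right atBot_le_cocompact

lemma comp_const_mul (h : HasContinuousLaplaceExtension u G) {δ : ℝ} (hδ : 0 < δ) :
    HasContinuousLaplaceExtension (fun y => u (δ * y)) fun s => (δ : ℂ)⁻¹ * G (s / δ) where
  measurable := h.measurable.comp (measurable_const_mul δ)
  bounded := h.bounded.imp fun _ hM y => hM (δ * y)
  eq_zero_of_nonpos y hy := h.eq_zero_of_nonpos _ (mul_nonpos_of_nonneg_of_nonpos hδ.le hy)
  continuousOn := by
    refine continuousOn_const.mul (h.continuousOn.comp (by fun_prop) fun s hs => ?_)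
    simpa only [Set.mem_ofPred_eq, Complex.div_ofReal_re] using div_nonneg hs hδ.le
  laplace s hs := by
    have hre : 0 < (s / δ).re := by simpa only [Complex.div_ofReal_re] using div_pos hs hδ
    rw [← h.laplace _ hre]
    have hsub := Measure.integral_comp_mul_left (fun y : ℝ => u y * Complex.exp (-(s / δ) * y)) δ
    rw [abs_of_pos (inv_pos.2 hδ), Complex.real_smul, Complex.ofReal_inv] at hsub
    rw [← hsub]
    congr 1 with y
    have hδ' : (δ : ℂ) ≠ 0 := by exact_mod_cast hδ.ne'
    push_cast
    field_simp

lemma exists_smoothing_kernel (h : HasContinuousLaplaceExtension u G) :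
    ∃ φ : ℝ → ℂ, Integrable φ ∧ ∫ w, φ w = 1 ∧
      ∀ δ > 0, Tendsto (fun x => ∫ w, u (x + δ * w) * φ w) atTop (𝓝 0) := by
  let b : ContDiffBump (0 : ℝ) := default
  have hsupp : HasCompactSupport (Complex.ofReal ∘ b) :=
    b.hasCompactSupport.comp_left Complex.ofReal_zero
  let g : SchwartzMap ℝ ℂ := hsupp.toSchwartzMap
    (Complex.ofRealCLM.contDiff.comp b.contDiff)
  have hFg : Integrable (𝓕 (g : ℝ → ℂ)) := by
    rw [← SchwartzMap.fourier_coe]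
    exact (𝓕 g).integrable
  refine ⟨𝓕 (g : ℝ → ℂ), hFg, ?_, fun δ hδ => ?_⟩
  · calc ∫ w, 𝓕 (g : ℝ → ℂ) w = 𝓕⁻ (𝓕 (g : ℝ → ℂ)) 0 := by simp [Real.fourierInv_eq]
      _ = g 0 := by rw [g.continuous.fourierInv_fourier_eq g.integrable hFg]
      _ = (b 0 : ℂ) := rfl
      _ = 1 := by simp [b.one_of_mem_closedBall (Metric.mem_closedBall_self b.rIn_pos.le)]
  · have hdil := (h.comp_const_mul hδ).tendsto_integral_mul_fourier g.continuous hsupp hFg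
    refine (hdil.comp (tendsto_id.const_mul_atTop (inv_pos.2 hδ))).congr fun x => ?_
    simp only [Function.comp_apply, id_eq, mul_add, mul_inv_cancel_left₀ hδ.ne']

end HasContinuousLaplaceExtension

section BoundedKernel

variable {u K φ : ℝ → ℂ} {M : ℝ}

lemma integrable_add_mul (hu : Measurable u) (hM : ∀ y, ‖u y‖ ≤ M) (hK : Integrable K) (x : ℝ) :
    Integrable fun v => u (x + v) * K v :=
  hK.bdd_mul (hu.comp (by fun_prop)).aestronglyMeasurable (ae_of_all _ fun v => hM (x + v))

lemma integrable_add_mul_prod (hu : Measurable u) (hM : ∀ y, ‖u y‖ ≤ M)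
    (hK : Integrable K) (hφ : Integrable φ) (δ x : ℝ) :
    Integrable (Function.uncurry fun w v => u (x + δ * w + v) * K v * φ w)
      (volume.prod volume) := by
  have hu' : Measurable fun p : ℝ × ℝ => u (x + δ * p.1 + p.2) := hu.comp (by fun_prop)
  refine ((hφ.mul_prod hK).bdd_mul hu'.aestronglyMeasurable (ae_of_all _ fun p => hM _)).congr
    (ae_of_all _ fun p => ?_)
  simp only [Function.uncurry]
  ring

lemma integral_integral_add_mul_comm (hu : Measurable u) (hM : ∀ y, ‖u y‖ ≤ M)
    (hK : Integrable K) (hφ : Integrable φ) (δ x : ℝ) :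
    ∫ w, (∫ v, u (x + δ * w + v) * K v) * φ w = ∫ v, (∫ w, u (x + v + δ * w) * φ w) * K v := by
  simp_rw [← integral_mul_const]
  rw [integral_integral_swap (integrable_add_mul_prod hu hM hK hφ δ x)]
  congr! 4 with v
  rw [add_right_comm, mul_right_comm]

lemma tendsto_integral_integral_add_mul (hu : Measurable u) (hM : ∀ y, ‖u y‖ ≤ M)
    (hK : Integrable K) (hφ : Integrable φ) {δ : ℝ}
    (hδ : Tendsto (fun x => ∫ w, u (x + δ * w) * φ w) atTop (𝓝 0)) :
    Tendsto (fun x => ∫ w, (∫ v, u (x + δ * w + v) * K v) * φ w) atTop (𝓝 0) := by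
  have hint (x : ℝ) : Integrable fun v => (∫ w, u (x + v + δ * w) * φ w) * K v := by
    simpa only [Function.uncurry, mul_right_comm _ (K _), integral_mul_const,
      add_right_comm x] using (integrable_add_mul_prod hu hM hK hφ δ x).integral_prod_right
  simp_rw [integral_integral_add_mul_comm hu hM hK hφ]
  rw [← integral_zero ℝ ℂ]
  refine tendsto_integral_filter_of_dominated_convergence (fun v => (∫ w, M * ‖φ w‖) * ‖K v‖)
    (Eventually.of_forall fun x => (hint x).aestronglyMeasurable)
    (Eventually.of_forall fun x => ae_of_all _ fun v => ?_) (hK.norm.const_mul _)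
    (ae_of_all _ fun v => ?_)
  · rw [norm_mul]
    gcongr
    refine norm_integral_le_of_norm_le (hφ.norm.const_mul M) (ae_of_all _ fun w => ?_)
    rw [norm_mul]
    exact mul_le_mul_of_nonneg_right (hM _) (norm_nonneg _)
  · simpa only [zero_mul, Function.comp_def, id_eq] using
      (hδ.comp (tendsto_atTop_add_const_right atTop v tendsto_id)).mul_const (K v)

lemma norm_integral_add_mul_sub_le (hu : Measurable u) (hM : ∀ y, ‖u y‖ ≤ M) (hK : Integrable K)
    (x h : ℝ) :
    ‖(∫ v, u (x + v) * K v) - ∫ v, u (x + h + v) * K v‖ ≤ M * ∫ v, ‖K (-h + v) - K v‖ := by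
  have hKh : Integrable fun v => K (-h + v) := hK.comp_add_left (-h)
  have hshift : ∫ v, u (x + h + v) * K v = ∫ v, u (x + v) * K (-h + v) := by
    rw [← integral_add_left_eq_self (fun v => u (x + v) * K (-h + v)) h]
    simp only [add_assoc, neg_add_cancel_left]
  rw [hshift, norm_sub_rev, ← integral_sub (integrable_add_mul hu hM hKh x)
    (integrable_add_mul hu hM hK x), ← integral_const_mul]
  refine norm_integral_le_of_norm_le ((hKh.sub hK).norm.const_mul M) (ae_of_all _ fun v => ?_)
  rw [← mul_sub, norm_mul]
  exact mul_le_mul_of_nonneg_right (hM _) (norm_nonneg _)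

lemma integral_norm_translate_sub_le (hK : Integrable K) (h : ℝ) :
    ∫ v, ‖K (h + v) - K v‖ ≤ 2 * ∫ v, ‖K v‖ := by
  have hKh : Integrable fun v => K (h + v) := hK.comp_add_left h
  calc ∫ v, ‖K (h + v) - K v‖ ≤ ∫ v, (‖K (h + v)‖ + ‖K v‖) :=
        integral_mono (hKh.sub hK).norm (hKh.norm.add hK.norm) fun v => norm_sub_le _ _
    _ = 2 * ∫ v, ‖K v‖ := by
        rw [integral_add hKh.norm hK.norm, integral_add_left_eq_self (fun v => ‖K v‖), two_mul]

lemma norm_integral_add_mul_sub_average_le (hu : Measurable u) (hM : ∀ y, ‖u y‖ ≤ M)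
    (hK : Integrable K) (hφ : Integrable φ) (hφ1 : ∫ w, φ w = 1) (δ x : ℝ) :
    ‖(∫ v, u (x + v) * K v) - ∫ w, (∫ v, u (x + δ * w + v) * K v) * φ w‖ ≤
      M * ∫ w, (∫ v, ‖K (-(δ * w) + v) - K v‖) * ‖φ w‖ := by
  have hint : Integrable fun w => (∫ v, u (x + δ * w + v) * K v) * φ w := by
    simpa only [Function.uncurry, integral_mul_const] using
      (integrable_add_mul_prod hu hM hK hφ δ x).integral_prod_left
  have hbound : Integrable fun w => (∫ v, ‖K (-(δ * w) + v) - K v‖) * ‖φ w‖ := by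
    have hcont : Continuous fun w => ∫ v, ‖K (-(δ * w) + v) - K v‖ :=
      (continuous_integral_norm_translate_sub hK).comp (by fun_prop)
    refine hφ.norm.bdd_mul (c := 2 * ∫ v, ‖K v‖) hcont.aestronglyMeasurable
      (ae_of_all _ fun w => ?_)
    rw [Real.norm_of_nonneg (integral_nonneg fun v => norm_nonneg _)]
    exact integral_norm_translate_sub_le hK _
  have hconst : ∫ v, u (x + v) * K v = ∫ w, (∫ v, u (x + v) * K v) * φ w := by
    rw [integral_const_mul, hφ1, mul_one]
  rw [hconst, ← integral_sub (hφ.const_mul _) hint, ← integral_const_mul]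
  refine norm_integral_le_of_norm_le (hbound.const_mul M) (ae_of_all _ fun w => ?_)
  rw [← sub_mul, norm_mul, ← mul_assoc]
  exact mul_le_mul_of_nonneg_right (norm_integral_add_mul_sub_le hu hM hK x _) (norm_nonneg _)

lemma tendsto_average_norm_translate_sub (hK : Integrable K) (hφ : Integrable φ) :
    Tendsto (fun δ : ℝ => ∫ w, (∫ v, ‖K (-(δ * w) + v) - K v‖) * ‖φ w‖) (𝓝 0) (𝓝 0) := by
  have hcont : Continuous fun h => ∫ v, ‖K (h + v) - K v‖ :=
    continuous_integral_norm_translate_sub hK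
  rw [← integral_zero ℝ ℝ]
  refine tendsto_integral_filter_of_dominated_convergence (fun w => (2 * ∫ v, ‖K v‖) * ‖φ w‖)
    (Eventually.of_forall fun δ => ?_) (Eventually.of_forall fun δ => ae_of_all _ fun w => ?_)
    (hφ.norm.const_mul _) (ae_of_all _ fun w => ?_)
  · exact (hcont.comp (by fun_prop : Continuous fun w => -(δ * w))).aestronglyMeasurable.mul
      hφ.norm.aestronglyMeasurable
  · rw [norm_mul, norm_norm, Real.norm_of_nonneg (integral_nonneg fun v => norm_nonneg _)]
    gcongr
    exact integral_norm_translate_sub_le hK _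
  · have hcomp : Continuous fun δ : ℝ => (∫ v, ‖K (-(δ * w) + v) - K v‖) * ‖φ w‖ :=
      (hcont.comp (by fun_prop)).mul_const _
    simpa using hcomp.tendsto 0

end BoundedKernel

theorem HasContinuousLaplaceExtension.tendsto_integral_add_mul {u K : ℝ → ℂ} {G : ℂ → ℂ}
    (h : HasContinuousLaplaceExtension u G) (hK : Integrable K) :
    Tendsto (fun x => ∫ v, u (x + v) * K v) atTop (𝓝 0) := by
  obtain ⟨M, hM⟩ := h.bounded
  obtain ⟨φ, hφ, hφ1, hφu⟩ := h.exists_smoothing_kernel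
  have hunif : TendstoUniformly (fun δ x => ∫ w, (∫ v, u (x + δ * w + v) * K v) * φ w)
      (fun x => ∫ v, u (x + v) * K v) (𝓝[>] 0) := by
    rw [Metric.tendstoUniformly_iff]
    intro ε hε
    have hsmall := ((tendsto_average_norm_translate_sub hK hφ).const_mul M).mono_left
      (nhdsWithin_le_nhds (s := Set.Ioi 0))
    rw [mul_zero] at hsmall
    filter_upwards [hsmall.eventually_lt_const hε] with δ hδ x
    rw [dist_eq_norm]
    exact (norm_integral_add_mul_sub_average_le h.measurable hM hK hφ hφ1 δ x).trans_lt hδ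
  exact (hunif.tendstoUniformlyOnFilter.mono_right le_top).tendsto_of_eventually_tendsto
    (eventually_mem_nhdsWithin.mono fun δ hδ =>
      tendsto_integral_integral_add_mul h.measurable hM hK hφ (hφu δ hδ)) tendsto_const_nhds

lemma setIntegral_Ioi_one_eq_setIntegral_exp {E : Type*} [NormedAddCommGroup E] [NormedSpace ℝ E]
    (g : ℝ → E) :
    ∫ x in Set.Ioi 1, g x = ∫ y in Set.Ioi 0, Real.exp y • g (Real.exp y) := by
  have hsub := integral_image_eq_integral_abs_deriv_smul measurableSet_Ioi
    (fun x _ => (Real.hasDerivAt_exp x).hasDerivWithinAt) Real.exp_injective.injOn g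
    (s := Set.Ioi 0)
  simpa only [Real.image_exp_Ioi, Real.exp_zero, Real.abs_exp] using hsub

lemma integrable_exp_mul_exp_neg_exp {s : ℝ} (hs : 0 < s) :
    Integrable fun v => Real.exp (s * v) * Real.exp (-Real.exp v) := by
  have hsub := integrableOn_image_iff_integrableOn_abs_deriv_smul MeasurableSet.univ
    (fun x _ => (Real.hasDerivAt_exp x).hasDerivWithinAt) Real.exp_injective.injOn
    fun x => Real.exp (-x) * x ^ (s - 1)
  rw [Set.image_univ, Real.range_exp, integrableOn_univ] at hsub
  refine (hsub.1 (Real.GammaIntegral_convergent hs)).congr (ae_of_all _ fun v => ?_)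
  simp only [Real.abs_exp, smul_eq_mul, ← Real.exp_mul, ← Real.exp_add]
  ring_nf

lemma integrableOn_Ioi_mul_exp_neg_mul {t : ℝ} (ht : 0 < t) :
    IntegrableOn (fun x => x * Real.exp (-t * x)) (Set.Ioi 1) := by
  have hIoi := integrableOn_rpow_mul_exp_neg_mul_rpow (p := 1) (s := 1) (by norm_num) one_pos ht
  simp only [Real.rpow_one] at hIoi
  exact hIoi.mono_set (Set.Ioi_subset_Ioi zero_le_one)

lemma integral_Ioi_mul_exp_neg_mul {t : ℝ} (ht : 0 < t) :
    ∫ x in Set.Ioi 1, x * Real.exp (-t * x) = (1 + t) * Real.exp (-t) / t ^ 2 := by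
  have hderiv (x : ℝ) : HasDerivAt (fun x => -((1 + t * x) * Real.exp (-t * x) / t ^ 2))
      (x * Real.exp (-t * x)) x := by
    have hlin : HasDerivAt (fun x => 1 + t * x) t x := by
      simpa using ((hasDerivAt_id x).const_mul t).const_add 1
    have hexp : HasDerivAt (fun x => Real.exp (-t * x)) (Real.exp (-t * x) * -t) x := by
      simpa using ((hasDerivAt_id x).const_mul (-t)).exp
    refine ((hlin.mul hexp).div_const (t ^ 2)).neg.congr_deriv ?_
    field_simp
    ring
  have hlim : Tendsto (fun x => -((1 + t * x) * Real.exp (-t * x) / t ^ 2)) atTop (𝓝 0) := by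
    have h0 : Tendsto (fun y : ℝ => (1 + y) * Real.exp (-y)) atTop (𝓝 0) := by
      simpa [add_mul] using
        Real.tendsto_exp_neg_atTop_nhds_zero.add (Real.tendsto_pow_mul_exp_neg_atTop_nhds_zero 1)
    simpa using ((h0.comp (tendsto_id.const_mul_atTop ht)).div_const (t ^ 2)).neg
  rw [integral_Ioi_of_hasDerivAt_of_nonneg' (fun x _ => hderiv x)
    (fun x hx => mul_nonneg (zero_le_one.trans (le_of_lt hx)) (Real.exp_nonneg _)) hlim]
  ring_nf

lemma deriv_cexp_ofReal_const_mul (c : ℂ) :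
    deriv (fun x : ℝ => Complex.exp (c * x)) = fun x : ℝ => c * Complex.exp (c * x) := by
  ext x
  have hlin : HasDerivAt (fun x : ℝ => c * x) c x := by
    simpa using (Complex.ofRealCLM.hasDerivAt (x := x)).const_mul c
  rw [hlin.cexp.deriv, mul_comm]

section Summatory

variable {b : ℕ → ℂ} {C : ℝ}

/-- The summatory function `x ↦ ∑_{k ≤ x} b k`. -/
noncomputable def summatory (b : ℕ → ℂ) (x : ℝ) : ℂ := ∑ k ∈ Finset.Icc 0 ⌊x⌋₊, b k

lemma measurable_summatory : Measurable (summatory b) :=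
  (measurable_from_nat (f := fun n => ∑ k ∈ Finset.Icc 0 n, b k)).comp Nat.measurable_floor

lemma norm_summatory_le (hC : ∀ n : ℕ, ∑ k ∈ Finset.Icc 0 n, ‖b k‖ ≤ C * n) {x : ℝ} (hx : 0 ≤ x) :
    ‖summatory b x‖ ≤ C * x := by
  have hC0 : 0 ≤ C := by
    simpa using (Finset.sum_nonneg fun k _ => norm_nonneg (b k)).trans (hC 1)
  exact (norm_sum_le _ _).trans ((hC _).trans (by gcongr; exact Nat.floor_le hx))

lemma norm_le_of_sum_norm_le (hC : ∀ n : ℕ, ∑ k ∈ Finset.Icc 0 n, ‖b k‖ ≤ C * n) (n : ℕ) :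
    ‖b n‖ ≤ C * n :=
  (Finset.single_le_sum (f := fun k => ‖b k‖) (fun k _ => norm_nonneg (b k))
    (Finset.mem_Icc.2 ⟨n.zero_le, le_rfl⟩)).trans (hC n)

lemma summable_mul_geometric_of_sum_norm_le
    (hC : ∀ n : ℕ, ∑ k ∈ Finset.Icc 0 n, ‖b k‖ ≤ C * n) {z : ℂ} (hz : ‖z‖ < 1) :
    Summable fun n => b n * z ^ n := by
  have hgeom := (summable_pow_mul_geometric_of_norm_lt_one 1 (r := ‖z‖) (by simpa)).mul_left C
  refine hgeom.of_norm_bounded fun n => ?_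
  rw [norm_mul, norm_pow, pow_one, ← mul_assoc]
  exact mul_le_mul_of_nonneg_right (norm_le_of_sum_norm_le hC n) (by positivity)

lemma LSeries_eq_mul_integral_summatory
    (hC : ∀ n : ℕ, ∑ k ∈ Finset.Icc 0 n, ‖b k‖ ≤ C * n) {s : ℂ} (hs : 1 < s.re) :
    LSeries b s = s * ∫ x in Set.Ioi (1 : ℝ), summatory b x * x ^ (-(s + 1)) := by
  have hb0 : b 0 = 0 := by simpa using hC 0
  have hIcc (n : ℕ) {E : Type} [AddCommGroup E] (f : ℕ → E) (hf : f 0 = 0) :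
      ∑ k ∈ Finset.Icc 0 n, f k = ∑ k ∈ Finset.Icc 1 n, f k := by
    rw [← Finset.insert_Icc_add_one_left_eq_Icc n.zero_le, Finset.sum_insert (by simp), hf,
      zero_add, zero_add]
  have hO : (fun n => ∑ k ∈ Finset.Icc 1 n, ‖b k‖) =O[atTop] fun n => (n : ℝ) ^ (1 : ℝ) := by
    refine IsBigO.of_bound C (Eventually.of_forall fun n => ?_)
    rw [← hIcc n _ (by simp [hb0]), Real.rpow_one, Real.norm_natCast,
      Real.norm_of_nonneg (Finset.sum_nonneg fun k _ => norm_nonneg _)]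
    exact hC n
  simp only [summatory, hIcc _ b hb0]
  exact LSeries_eq_mul_integral' b zero_le_one hs hO

lemma norm_exp_mul_summatory_le (hC : ∀ n : ℕ, ∑ k ∈ Finset.Icc 0 n, ‖b k‖ ≤ C * n) (t : ℝ)
    {x : ℝ} (hx : 0 ≤ x) :
    ‖Complex.exp (-t * x) * summatory b x‖ ≤ C * (x * Real.exp (-t * x)) := by
  have hexp : ‖Complex.exp (-t * x)‖ = Real.exp (-t * x) := by simp [Complex.norm_exp]
  rw [norm_mul, hexp, mul_comm, ← mul_assoc]
  exact mul_le_mul_of_nonneg_right (norm_summatory_le hC hx) (Real.exp_nonneg _)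

lemma tsum_mul_exp_eq_mul_integral_summatory
    (hC : ∀ n : ℕ, ∑ k ∈ Finset.Icc 0 n, ‖b k‖ ≤ C * n) {t : ℝ} (ht : 0 < t) :
    ∑' n, b n * Complex.exp (-t) ^ n =
      t * ∫ x in Set.Ioi (1 : ℝ), summatory b x * Complex.exp (-t * x) := by
  have hderiv := deriv_cexp_ofReal_const_mul (-t)
  have hderiv_cont : Continuous (deriv fun x : ℝ => Complex.exp (-t * x)) := by
    rw [hderiv]; fun_prop
  have hlim : Tendsto (fun n : ℕ => Complex.exp (-t * (n : ℝ)) * ∑ k ∈ Finset.Icc 0 n, b k)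
      atTop (𝓝 0) := by
    have hdecay : Tendsto (fun x : ℝ => C * (x * Real.exp (-t * x))) atTop (𝓝 0) := by
      simpa using (tendsto_rpow_mul_exp_neg_mul_atTop_nhds_zero 1 t ht).const_mul C
    refine squeeze_zero_norm (fun n => ?_) (hdecay.comp tendsto_natCast_atTop_atTop)
    simpa [summatory] using norm_exp_mul_summatory_le hC t n.cast_nonneg
  have hdom : (fun x : ℝ => deriv (fun x : ℝ => Complex.exp (-t * x)) x * summatory b x) =O[atTop]
      fun x => x * Real.exp (-t * x) := by
    simp_rw [hderiv, mul_assoc]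
    refine IsBigO.const_mul_left (IsBigO.of_bound C ?_) _
    filter_upwards [eventually_ge_atTop 0] with x hx
    rw [Real.norm_of_nonneg (by positivity)]
    exact norm_exp_mul_summatory_le hC t hx
  have habel := tendsto_sum_mul_atTop_nhds_one_sub_integral₀ b (by simpa using hC 0)
    (fun x _ => by fun_prop) (hderiv_cont.locallyIntegrable.locallyIntegrableOn _) hlim hdom
    ⟨Set.Ioi 1, Ioi_mem_atTop 1, integrableOn_Ioi_mul_exp_neg_mul ht⟩
  have hz : ‖Complex.exp (-t)‖ < 1 := by simpa [Complex.norm_exp] using ht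
  have hsum := (tendsto_add_atTop_iff_nat 1).2
    (summable_mul_geometric_of_sum_norm_le hC hz).hasSum.tendsto_sum_nat
  refine tendsto_nhds_unique hsum ?_
  convert habel using 2 with n
  · simp_rw [Nat.range_succ_eq_Icc_zero, ← Complex.exp_nat_mul]
    refine Finset.sum_congr rfl fun k _ => ?_
    rw [mul_comm, mul_comm (k : ℂ), Complex.ofReal_natCast]
  · simp_rw [hderiv, zero_sub, mul_assoc, integral_const_mul, neg_mul, neg_neg,
      mul_comm (summatory b _)]
    rfl

/-- The error `e⁻ʸ ∑_{k ≤ eʸ} b k - A` in the mean value `A`, on the logarithmic scale and cut off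
at `y = 0`, so that its Laplace transform is `(∑ b n / n ^ (s + 1)) / (s + 1) - A / s`. -/
noncomputable def logScaleError (b : ℕ → ℂ) (A : ℂ) : ℝ → ℂ :=
  (Set.Ioi 0).indicator fun y => Complex.exp (-y) * summatory b (Real.exp y) - A

lemma add_one_ne_zero_of_re_nonneg {s : ℂ} (hs : 0 ≤ s.re) : s + 1 ≠ 0 := fun h => by
  have hre : s.re + 1 = 0 := congrArg Complex.re h
  linarith

lemma measurable_exp_mul_summatory_exp :
    Measurable fun y : ℝ => Complex.exp (-y) * summatory b (Real.exp y) := by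
  have hsum := measurable_summatory (b := b)
  fun_prop

lemma norm_exp_neg_mul_summatory_exp_le (hC : ∀ n : ℕ, ∑ k ∈ Finset.Icc 0 n, ‖b k‖ ≤ C * n)
    (y : ℝ) : ‖Complex.exp (-y) * summatory b (Real.exp y)‖ ≤ C := by
  have hexp : ‖Complex.exp (-y)‖ = (Real.exp y)⁻¹ := by simp [Complex.norm_exp, Real.exp_neg]
  rw [norm_mul, hexp, inv_mul_le_iff₀ (Real.exp_pos y), mul_comm]
  exact norm_summatory_le hC (Real.exp_nonneg y)

lemma LSeries_eq_mul_laplace_summatory (hC : ∀ n : ℕ, ∑ k ∈ Finset.Icc 0 n, ‖b k‖ ≤ C * n)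
    {s : ℂ} (hs : 0 < s.re) :
    LSeries b (s + 1) = (s + 1) * ∫ y in Set.Ioi (0 : ℝ),
      Complex.exp (-y) * summatory b (Real.exp y) * Complex.exp (-s * y) := by
  rw [LSeries_eq_mul_integral_summatory hC (by simpa using hs),
    setIntegral_Ioi_one_eq_setIntegral_exp]
  congr 2 with y
  have hpow : ((Real.exp y : ℝ) : ℂ) ^ (-(s + 1 + 1)) = Complex.exp (y * -(s + 1 + 1)) := by
    rw [Complex.cpow_def_of_ne_zero (by exact_mod_cast (Real.exp_pos y).ne'),
      ← Complex.ofReal_log (Real.exp_pos y).le, Real.log_exp]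
  have hexp : Complex.exp y * Complex.exp (y * -(s + 1 + 1)) =
      Complex.exp (-y) * Complex.exp (-s * y) := by
    rw [← Complex.exp_add, ← Complex.exp_add]
    ring_nf
  rw [hpow, Complex.real_smul, Complex.ofReal_exp]
  linear_combination summatory b (Real.exp y) * hexp

lemma laplace_logScaleError (hC : ∀ n : ℕ, ∑ k ∈ Finset.Icc 0 n, ‖b k‖ ≤ C * n) (A : ℂ)
    {s : ℂ} (hs : 0 < s.re) :
    ∫ y, logScaleError b A y * Complex.exp (-s * y) = LSeries b (s + 1) / (s + 1) - A / s := by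
  have hs1 : s + 1 ≠ 0 := add_one_ne_zero_of_re_nonneg hs.le
  have hexp : IntegrableOn (fun y : ℝ => Complex.exp (-s * y)) (Set.Ioi 0) :=
    integrableOn_exp_mul_complex_Ioi (by simpa using hs) 0
  have hsum : IntegrableOn
      (fun y : ℝ => Complex.exp (-y) * summatory b (Real.exp y) * Complex.exp (-s * y))
      (Set.Ioi 0) :=
    hexp.bdd_mul measurable_exp_mul_summatory_exp.aestronglyMeasurable
      (ae_of_all _ (norm_exp_neg_mul_summatory_exp_le hC))
  calc ∫ y, logScaleError b A y * Complex.exp (-s * y)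
      = ∫ y in Set.Ioi (0 : ℝ),
          (Complex.exp (-y) * summatory b (Real.exp y) * Complex.exp (-s * y) -
            A * Complex.exp (-s * y)) := by
        rw [← integral_indicator measurableSet_Ioi]
        congr 1 with y
        simp only [logScaleError, Set.indicator_apply]
        split_ifs <;> ring
    _ = LSeries b (s + 1) / (s + 1) - A / s := by
        rw [integral_sub hsum (hexp.const_mul A), integral_const_mul,
          integral_exp_mul_complex_Ioi (by simpa using hs), LSeries_eq_mul_laplace_summatory hC hs,
          mul_div_cancel_left₀ _ hs1]
        simp [div_eq_mul_inv]

lemma hasContinuousLaplaceExtension_logScaleError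
    (hC : ∀ n : ℕ, ∑ k ∈ Finset.Icc 0 n, ‖b k‖ ≤ C * n) {A : ℂ} {H : ℂ → ℂ}
    (hH : ContinuousOn H {s | 1 ≤ s.re})
    (hL : ∀ s : ℂ, 1 < s.re → LSeries b s = A / (s - 1) + H s) :
    HasContinuousLaplaceExtension (logScaleError b A) fun s => (H (s + 1) - A) / (s + 1) where
  measurable := (measurable_exp_mul_summatory_exp.sub_const A).indicator measurableSet_Ioi
  bounded := ⟨C + ‖A‖, fun y => (norm_indicator_le_norm_self _ _).trans
    ((norm_sub_le _ _).trans (by gcongr; exact norm_exp_neg_mul_summatory_exp_le hC y))⟩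
  eq_zero_of_nonpos y hy := Set.indicator_of_notMem (not_lt.2 hy) _
  continuousOn := by
    refine ContinuousOn.div ?_ (by fun_prop) fun s hs => add_one_ne_zero_of_re_nonneg hs
    exact (hH.comp (by fun_prop) fun s hs => by simpa using hs).sub continuousOn_const
  laplace s hs := by
    have hs0 : s ≠ 0 := by rintro rfl; simp at hs
    have hs1 : s + 1 ≠ 0 := add_one_ne_zero_of_re_nonneg hs.le
    rw [laplace_logScaleError hC A hs, hL _ (by simpa using hs), add_sub_cancel_right]
    field_simp
    ring

lemma integral_Ioi_summatory_sub_mul_exp (hC : ∀ n : ℕ, ∑ k ∈ Finset.Icc 0 n, ‖b k‖ ≤ C * n) (A : ℂ)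
    {t : ℝ} (ht : 0 < t) :
    ∫ x in Set.Ioi (1 : ℝ), (summatory b x - A * x) * Complex.exp (-t * x) =
      (∑' n, b n * Complex.exp (-t) ^ n) / t - A * ((1 + t) * Complex.exp (-t) / t ^ 2) := by
  have hxcast (x : ℝ) : x * Complex.exp (-t * x) = (x * Real.exp (-t * x) : ℝ) := by push_cast; rfl
  have hx : IntegrableOn (fun x : ℝ => x * Complex.exp (-t * x)) (Set.Ioi 1) := by
    simp_rw [hxcast]
    exact (integrableOn_Ioi_mul_exp_neg_mul ht).ofReal
  have hS : IntegrableOn (fun x : ℝ => summatory b x * Complex.exp (-t * x)) (Set.Ioi 1) := by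
    refine ((integrableOn_Ioi_mul_exp_neg_mul ht).const_mul C).mono'
      (measurable_summatory.mul (by fun_prop)).aestronglyMeasurable ?_
    filter_upwards [ae_restrict_mem measurableSet_Ioi] with x hx
    rw [mul_comm]
    exact norm_exp_mul_summatory_le hC t (zero_le_one.trans (le_of_lt hx))
  have hmoment : ∫ x in Set.Ioi (1 : ℝ), x * Complex.exp (-t * x) =
      (1 + t) * Complex.exp (-t) / t ^ 2 := by
    simp_rw [hxcast]
    rw [integral_complex_ofReal, integral_Ioi_mul_exp_neg_mul ht]
    push_cast
    rfl
  have ht' : (t : ℂ) ≠ 0 := by exact_mod_cast ht.ne'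
  simp_rw [sub_mul, mul_assoc A]
  rw [integral_sub hS (hx.const_mul A), integral_const_mul, hmoment,
    tsum_mul_exp_eq_mul_integral_summatory hC ht, mul_div_cancel_left₀ _ ht']

lemma integral_logScaleError_mul_exp_mul_exp_neg_exp (b : ℕ → ℂ) (A : ℂ) {t : ℝ} (ht : 0 < t) :
    ∫ v, logScaleError b A (-Real.log t + v) * (Real.exp (2 * v) * Real.exp (-Real.exp v) : ℝ) =
      t ^ 2 * ∫ x in Set.Ioi (1 : ℝ), (summatory b x - A * x) * Complex.exp (-t * x) := by
  have hkernel (y : ℝ) : Real.exp (2 * (Real.log t + y)) * Real.exp (-Real.exp (Real.log t + y)) =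
      t ^ 2 * Real.exp y ^ 2 * Real.exp (-t * Real.exp y) := by
    rw [two_mul, Real.exp_add (_ + _), Real.exp_add, Real.exp_log ht, neg_mul]
    ring
  rw [← integral_add_left_eq_self _ (Real.log t), setIntegral_Ioi_one_eq_setIntegral_exp,
    ← integral_const_mul, ← integral_indicator measurableSet_Ioi]
  congr 1 with y
  simp only [neg_add_cancel_left, hkernel, logScaleError, Set.indicator_apply]
  split_ifs
  · have hinv : Complex.exp (-y) * Complex.exp y = 1 := by
      rw [← Complex.exp_add, neg_add_cancel, Complex.exp_zero]
    rw [Complex.real_smul]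
    push_cast
    linear_combination t ^ 2 * Complex.exp y * Complex.exp (-t * Complex.exp y) *
      summatory b (Real.exp y) * hinv
  · rw [zero_mul]

theorem tendsto_mul_tsum_mul_exp (hC : ∀ n : ℕ, ∑ k ∈ Finset.Icc 0 n, ‖b k‖ ≤ C * n) {A : ℂ}
    {H : ℂ → ℂ} (hH : ContinuousOn H {s | 1 ≤ s.re})
    (hL : ∀ s : ℂ, 1 < s.re → LSeries b s = A / (s - 1) + H s) :
    Tendsto (fun t : ℝ => t * ∑' n, b n * Complex.exp (-t) ^ n) (𝓝[>] 0) (𝓝 A) := by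
  have hlog : Tendsto (fun t => -Real.log t) (𝓝[>] 0) atTop :=
    tendsto_neg_atBot_atTop.comp Real.tendsto_log_nhdsGT_zero
  have herror := ((hasContinuousLaplaceExtension_logScaleError hC hH hL).tendsto_integral_add_mul
    (integrable_exp_mul_exp_neg_exp two_pos).ofReal).comp hlog
  have hmain : Tendsto (fun t : ℝ => A * ((1 + t) * Complex.exp (-t))) (𝓝[>] 0) (𝓝 A) := by
    have hcont : Continuous fun t : ℝ => A * ((1 + t) * Complex.exp (-t)) := by fun_prop
    simpa using (hcont.tendsto 0).mono_left nhdsWithin_le_nhds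
  rw [← zero_add A]
  refine (herror.add hmain).congr' ?_
  filter_upwards [self_mem_nhdsWithin] with t ht
  have ht' : (t : ℂ) ≠ 0 := by exact_mod_cast (ne_of_gt ht)
  refine (congrArg (· + _) ((integral_logScaleError_mul_exp_mul_exp_neg_exp b A ht).trans
    (congrArg _ (integral_Ioi_summatory_sub_mul_exp hC A ht)))).trans ?_
  field_simp
  ring

theorem tendsto_one_sub_mul_tsum_mul_pow
    (hC : ∀ n : ℕ, ∑ k ∈ Finset.Icc 0 n, ‖b k‖ ≤ C * n) {A : ℂ}
    {H : ℂ → ℂ} (hH : ContinuousOn H {s | 1 ≤ s.re})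
    (hL : ∀ s : ℂ, 1 < s.re → LSeries b s = A / (s - 1) + H s) :
    Tendsto (fun z : ℝ => (1 - z) * ∑' n, b n * z ^ n) (𝓝[<] 1) (𝓝 A) := by
  have hpos : ∀ᶠ z : ℝ in 𝓝[<] 1, z ∈ Set.Ioo (0 : ℝ) 1 := Ioo_mem_nhdsLT one_pos
  have hlog : Tendsto (fun z : ℝ => -Real.log z) (𝓝[<] 1) (𝓝[>] 0) := by
    refine tendsto_nhdsWithin_iff.2 ⟨?_, hpos.mono fun z hz => neg_pos.2 (Real.log_neg hz.1 hz.2)⟩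
    have hcont : ContinuousAt (fun z => -Real.log z) 1 := (Real.continuousAt_log one_ne_zero).neg
    simpa using hcont.tendsto.mono_left nhdsWithin_le_nhds
  have hslope : Tendsto (fun z : ℝ => Real.log z / (z - 1)) (𝓝[<] 1) (𝓝 1) := by
    have hderiv := (Real.hasDerivAt_log one_ne_zero).tendsto_slope.mono_left
      (nhdsWithin_mono 1 fun z (hz : z ∈ Set.Iio 1) => ne_of_lt hz)
    simpa [slope_fun_def_field] using hderiv
  have hquot := ((tendsto_mul_tsum_mul_exp hC hH hL).comp hlog).div
    ((Complex.continuous_ofReal.tendsto 1).comp hslope) (by simp)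
  rw [Complex.ofReal_one, div_one] at hquot
  refine hquot.congr' ?_
  filter_upwards [hpos] with z hz
  have hlogz : (Real.log z : ℂ) ≠ 0 := by exact_mod_cast (Real.log_neg hz.1 hz.2).ne
  have hexp : Complex.exp (Real.log z : ℝ) = z := by rw [← Complex.ofReal_exp, Real.exp_log hz.1]
  simp only [Pi.div_apply, Function.comp_apply, Complex.ofReal_neg, neg_neg, hexp,
    Complex.ofReal_div, Complex.ofReal_sub, Complex.ofReal_one]
  field_simp
  ring

end Summatory

lemma natCast_mul_one_sub_mul_pow_le_one {z : ℝ} (hz0 : 0 ≤ z) (hz1 : z ≤ 1) (n : ℕ) :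
    n * (1 - z) * z ^ n ≤ 1 :=
  calc n * (1 - z) * z ^ n = (∑ _k ∈ Finset.range n, z ^ n) * (1 - z) := by
        rw [Finset.sum_const, Finset.card_range, nsmul_eq_mul]
        ring
    _ ≤ (∑ k ∈ Finset.range n, z ^ k) * (1 - z) := by
        refine mul_le_mul_of_nonneg_right (Finset.sum_le_sum fun k hk => ?_) (sub_nonneg.2 hz1)
        exact pow_le_pow_of_le_one hz0 hz1 (Finset.mem_range.1 hk).le
    _ = 1 - z ^ n := geom_sum_mul_neg z n
    _ ≤ 1 := sub_le_self 1 (pow_nonneg hz0 n)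

lemma summable_mul_pow_of_le_natCast {d : ℕ → ℝ} {z : ℝ} (hd0 : ∀ n, 0 ≤ d n)
    (hd : ∀ n, d n ≤ n) (hz0 : 0 ≤ z) (hz1 : z < 1) : Summable fun n => d n * z ^ n := by
  have hgeom : Summable fun n : ℕ => (n : ℝ) * z ^ n := by
    simpa using summable_pow_mul_geometric_of_norm_lt_one 1
      ((Real.norm_of_nonneg hz0).trans_lt hz1)
  exact hgeom.of_nonneg_of_le (fun n => mul_nonneg (hd0 n) (pow_nonneg hz0 n))
    fun n => mul_le_mul_of_nonneg_right (hd n) (pow_nonneg hz0 n)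

lemma tendsto_one_sub_mul_tsum_of_summable_div {d : ℕ → ℝ} (h0 : d 0 = 0)
    (hd : Summable fun n => d n / n) :
    Tendsto (fun z : ℝ => (1 - z) * ∑' n, d n * z ^ n) (𝓝[<] 1) (𝓝 0) := by
  simp_rw [← tsum_mul_left]
  rw [← tsum_zero (α := ℝ) (β := ℕ)]
  refine tendsto_tsum_of_dominated_convergence hd.norm (fun n => ?_) ?_
  · have hcont : Continuous fun z : ℝ => (1 - z) * (d n * z ^ n) := by fun_prop
    simpa using (hcont.tendsto 1).mono_left nhdsWithin_le_nhds
  · filter_upwards [Ioo_mem_nhdsLT one_pos] with z hz n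
    rcases eq_or_ne n 0 with rfl | hn
    · simp [h0]
    · have hterm : (1 - z) * (d n * z ^ n) = d n / n * (n * (1 - z) * z ^ n) := by
        have hn' : (n : ℝ) ≠ 0 := Nat.cast_ne_zero.2 hn
        field_simp
      have hnn : 0 ≤ n * (1 - z) * z ^ n :=
        mul_nonneg (mul_nonneg n.cast_nonneg (sub_nonneg.2 hz.2.le)) (pow_nonneg hz.1.le n)
      rw [hterm, norm_mul, Real.norm_of_nonneg hnn]
      exact mul_le_of_le_one_right (norm_nonneg _)
        (natCast_mul_one_sub_mul_pow_le_one hz.1.le hz.2.le n)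

lemma tendsto_log_one_div_one_sub :
    Tendsto (fun z : ℝ => Real.log (1 / (1 - z))) (𝓝[<] 1) atTop := by
  refine Real.tendsto_log_atTop.comp ?_
  simp_rw [one_div]
  refine tendsto_inv_nhdsGT_zero.comp (tendsto_nhdsWithin_iff.2 ⟨?_, ?_⟩)
  · have hcont : Continuous fun z : ℝ => 1 - z := by fun_prop
    simpa using (hcont.tendsto 1).mono_left nhdsWithin_le_nhds
  · filter_upwards [self_mem_nhdsWithin] with z (hz : z < 1) using sub_pos.2 hz

lemma tendsto_div_sub_two_mul_log :
    Tendsto (fun x : ℝ => x / (x - 2 * Real.log x)) atTop (𝓝 1) := by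
  have hlog : Tendsto (fun x : ℝ => Real.log x / x) atTop (𝓝 0) :=
    Real.isLittleO_log_id_atTop.tendsto_div_nhds_zero
  have hinv : Tendsto (fun x : ℝ => (1 - 2 * (Real.log x / x))⁻¹) atTop (𝓝 1) := by
    simpa using ((hlog.const_mul 2).const_sub 1).inv₀ (by norm_num)
  refine hinv.congr' ?_
  filter_upwards [eventually_gt_atTop 0] with x hx
  rw [← mul_div_assoc, one_sub_div hx.ne', inv_div]

lemma eventually_sub_two_mul_log_pos : ∀ᶠ x : ℝ in atTop, 0 < x - 2 * Real.log x := by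
  filter_upwards [tendsto_div_sub_two_mul_log.eventually_const_lt one_pos,
    eventually_gt_atTop 0] with x hdiv hx
  exact (div_pos_iff_of_pos_left hx).1 hdiv

section LogWeight

variable {c : ℕ → ℝ} {A z : ℝ}

lemma summable_mul_pow (hc0 : ∀ n, 0 ≤ c n) (hc1 : ∀ n, c n ≤ 1) (hz0 : 0 ≤ z) (hz1 : z < 1) :
    Summable fun n => c n * z ^ n :=
  (summable_geometric_of_lt_one hz0 hz1).of_nonneg_of_le
    (fun n => mul_nonneg (hc0 n) (pow_nonneg hz0 n))
    fun n => mul_le_of_le_one_left (pow_nonneg hz0 n) (hc1 n)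

lemma mul_log_mul_pow_nonneg (hc0 : ∀ n, 0 ≤ c n) (hz0 : 0 ≤ z) (n : ℕ) :
    0 ≤ c n * Real.log n * z ^ n :=
  mul_nonneg (mul_nonneg (hc0 n) (Real.log_natCast_nonneg n)) (pow_nonneg hz0 n)

lemma summable_mul_log_mul_pow (hc0 : ∀ n, 0 ≤ c n) (hc1 : ∀ n, c n ≤ 1) (hz0 : 0 ≤ z)
    (hz1 : z < 1) : Summable fun n => c n * Real.log n * z ^ n :=
  summable_mul_pow_of_le_natCast (fun n => mul_nonneg (hc0 n) (Real.log_natCast_nonneg n))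
    (fun n => (mul_le_of_le_one_left (Real.log_natCast_nonneg n) (hc1 n)).trans
      (Real.log_le_self n.cast_nonneg)) hz0 hz1

lemma log_mul_tsum_le (hc0 : ∀ n, 0 ≤ c n) (hc1 : ∀ n, c n ≤ 1) (hz0 : 0 ≤ z) (hz1 : z < 1)
    {R : ℝ} (hR : 1 ≤ R) :
    Real.log R * ∑' n, c n * z ^ n ≤ Real.log R * (R + 1) + ∑' n, c n * Real.log n * z ^ n := by
  set N := ⌊R⌋₊ + 1
  have hlogR : 0 ≤ Real.log R := Real.log_nonneg hR
  have hf := summable_mul_pow hc0 hc1 hz0 hz1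
  have hg := summable_mul_log_mul_pow hc0 hc1 hz0 hz1
  have hhead : ∑ n ∈ Finset.range N, c n * z ^ n ≤ R + 1 := by
    calc ∑ n ∈ Finset.range N, c n * z ^ n ≤ ∑ _n ∈ Finset.range N, (1 : ℝ) :=
          Finset.sum_le_sum fun n _ =>
            mul_le_one₀ (hc1 n) (pow_nonneg hz0 n) (pow_le_one₀ hz0 hz1.le)
      _ ≤ R + 1 := by simpa [N] using Nat.floor_le (zero_le_one.trans hR)
  have htail : Real.log R * ∑' n, c (n + N) * z ^ (n + N) ≤
      ∑' n, c (n + N) * Real.log (n + N : ℕ) * z ^ (n + N) := by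
    rw [← tsum_mul_left]
    refine Summable.tsum_le_tsum (fun n => ?_)
      (((summable_nat_add_iff N).2 hf).mul_left _) ((summable_nat_add_iff N).2 hg)
    have hRn : R ≤ (n + N : ℕ) :=
      (Nat.lt_floor_add_one R).le.trans (by exact_mod_cast Nat.le_add_left N n)
    rw [← mul_assoc, mul_comm (Real.log R)]
    have hlog := Real.log_le_log (zero_lt_one.trans_le hR) hRn
    have hcn := hc0 (n + N)
    gcongr
  have hg0 : 0 ≤ ∑ n ∈ Finset.range N, c n * Real.log n * z ^ n :=
    Finset.sum_nonneg fun n _ => mul_log_mul_pow_nonneg hc0 hz0 n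
  rw [← hf.sum_add_tsum_nat_add N, ← hg.sum_add_tsum_nat_add N, mul_add]
  linarith [mul_le_mul_of_nonneg_left hhead hlogR]

lemma natCast_mul_one_sub_mul_pow_le_sqrt (hz0 : 0 ≤ z) (hz1 : z ≤ 1) (n : ℕ) :
    n * (1 - z) * z ^ n ≤ 2 * √z ^ n := by
  obtain ⟨w, hw0, rfl⟩ : ∃ w, 0 ≤ w ∧ w ^ 2 = z := ⟨√z, Real.sqrt_nonneg z, Real.sq_sqrt hz0⟩
  have hw1 : w ≤ 1 := (sq_le_one_iff₀ hw0).1 hz1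
  rw [Real.sqrt_sq hw0]
  calc n * (1 - w ^ 2) * (w ^ 2) ^ n = (1 + w) * w ^ n * (n * (1 - w) * w ^ n) := by ring
    _ ≤ (1 + w) * w ^ n * 1 := by
        gcongr
        exact natCast_mul_one_sub_mul_pow_le_one hw0 hw1 n
    _ ≤ 2 * w ^ n := by
        rw [mul_one]
        gcongr
        linarith

lemma log_natCast_le_log_one_div_one_sub_add (hz0 : 0 ≤ z) (hz1 : z < 1) (n : ℕ) :
    Real.log n ≤ Real.log (1 / (1 - z)) + n * (1 - z) := by
  have hz : 0 < 1 - z := sub_pos.2 hz1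
  rcases n.eq_zero_or_pos with rfl | hn
  · simpa using Real.log_nonpos hz.le (sub_le_self 1 hz0)
  · have hn' : (0 : ℝ) < n := Nat.cast_pos.2 hn
    have hle := Real.log_le_self (mul_pos hn' hz).le
    rw [Real.log_mul hn'.ne' hz.ne'] at hle
    rw [one_div, Real.log_inv]
    linarith

lemma tsum_mul_log_mul_pow_le (hc0 : ∀ n, 0 ≤ c n) (hc1 : ∀ n, c n ≤ 1) (hz0 : 0 ≤ z)
    (hz1 : z < 1) :
    ∑' n, c n * Real.log n * z ^ n ≤
      Real.log (1 / (1 - z)) * ∑' n, c n * z ^ n + 2 * ∑' n, c n * √z ^ n := by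
  have hf := (summable_mul_pow hc0 hc1 hz0 hz1).mul_left (Real.log (1 / (1 - z)))
  have hsqrt := (summable_mul_pow hc0 hc1 (Real.sqrt_nonneg z)
    (Real.sqrt_lt_sqrt hz0 hz1 |>.trans_eq Real.sqrt_one)).mul_left 2
  rw [← tsum_mul_left, ← tsum_mul_left, ← hf.tsum_add hsqrt]
  refine Summable.tsum_le_tsum (fun n => ?_) (summable_mul_log_mul_pow hc0 hc1 hz0 hz1)
    (hf.add hsqrt)
  calc c n * Real.log n * z ^ n
      ≤ c n * (Real.log (1 / (1 - z)) + n * (1 - z)) * z ^ n := by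
        have hcn := hc0 n
        gcongr
        exact log_natCast_le_log_one_div_one_sub_add hz0 hz1 n
    _ = Real.log (1 / (1 - z)) * (c n * z ^ n) + c n * (n * (1 - z) * z ^ n) := by ring
    _ ≤ Real.log (1 / (1 - z)) * (c n * z ^ n) + c n * (2 * √z ^ n) := by
        refine add_le_add_right (mul_le_mul_of_nonneg_left ?_ (hc0 n)) _
        exact natCast_mul_one_sub_mul_pow_le_sqrt hz0 hz1.le n
    _ = _ := by ring

-- This is `log_mul_tsum_le` with the head of the series cut at `R = exp (L - 2 log L)`.
lemma tsum_mul_log_le (hc0 : ∀ n, 0 ≤ c n) (hc1 : ∀ n, c n ≤ 1) (hz0 : 0 ≤ z) (hz1 : z < 1)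
    {L : ℝ} (hL : L = Real.log (1 / (1 - z))) (hL0 : 0 < L) (hLlog : 0 < L - 2 * Real.log L) :
    (∑' n, c n * z ^ n) * ((1 - z) * L) ≤ 1 / L + L * Real.exp (-L) +
      (1 - z) * (∑' n, c n * Real.log n * z ^ n) * (L / (L - 2 * Real.log L)) := by
  have hz : 0 < 1 - z := sub_pos.2 hz1
  have hexp : Real.exp (-L) = 1 - z := by
    rw [hL, one_div, Real.log_inv, neg_neg, Real.exp_log hz]
  have hR : Real.exp (L - 2 * Real.log L) = 1 / ((1 - z) * L ^ 2) := by
    rw [← hexp, Real.exp_sub, two_mul, Real.exp_add, Real.exp_log hL0, Real.exp_neg]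
    field_simp
  have hmain := log_mul_tsum_le hc0 hc1 hz0 hz1 (Real.one_le_exp hLlog.le)
  rw [Real.log_exp, hR, ← sub_le_iff_le_add', ← mul_sub, mul_comm, ← le_div_iff₀ hLlog,
    sub_le_iff_le_add'] at hmain
  calc (∑' n, c n * z ^ n) * ((1 - z) * L) ≤ _ := mul_le_mul_of_nonneg_right hmain (by positivity)
    _ = _ := by
      rw [hexp]
      field_simp

lemma exists_tendsto_tsum_mul_log_le (hc0 : ∀ n, 0 ≤ c n) (hc1 : ∀ n, c n ≤ 1)
    (hA : Tendsto (fun z => (1 - z) * ∑' n, c n * Real.log n * z ^ n) (𝓝[<] 1) (𝓝 A)) :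
    ∃ U : ℝ → ℝ, Tendsto U (𝓝[<] 1) (𝓝 A) ∧
      ∀ᶠ z in 𝓝[<] 1, (∑' n, c n * z ^ n) * ((1 - z) * Real.log (1 / (1 - z))) ≤ U z := by
  have hL := tendsto_log_one_div_one_sub
  have hexp : Tendsto (fun x : ℝ => x * Real.exp (-x)) atTop (𝓝 0) := by
    simpa using Real.tendsto_pow_mul_exp_neg_atTop_nhds_zero 1
  have hU := (((tendsto_const_nhds (x := (1 : ℝ))).div_atTop hL).add (hexp.comp hL)).add
    (hA.mul (tendsto_div_sub_two_mul_log.comp hL))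
  rw [add_zero, zero_add, mul_one] at hU
  refine ⟨_, hU, ?_⟩
  filter_upwards [Ioo_mem_nhdsLT one_pos, hL.eventually_gt_atTop 0,
    hL.eventually eventually_sub_two_mul_log_pos] with z hz hLz hLlog
  exact tsum_mul_log_le hc0 hc1 hz.1.le hz.2 rfl hLz hLlog

lemma tendsto_one_sub_mul_tsum_zero (hc0 : ∀ n, 0 ≤ c n) (hc1 : ∀ n, c n ≤ 1)
    (hA : Tendsto (fun z => (1 - z) * ∑' n, c n * Real.log n * z ^ n) (𝓝[<] 1) (𝓝 A)) :
    Tendsto (fun z => (1 - z) * ∑' n, c n * z ^ n) (𝓝[<] 1) (𝓝 0) := by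
  obtain ⟨U, hU, hle⟩ := exists_tendsto_tsum_mul_log_le hc0 hc1 hA
  refine squeeze_zero' ?_ ?_ (hU.div_atTop tendsto_log_one_div_one_sub)
  · filter_upwards [Ioo_mem_nhdsLT one_pos] with z hz
    exact mul_nonneg (sub_nonneg.2 hz.2.le)
      (tsum_nonneg fun n => mul_nonneg (hc0 n) (pow_nonneg hz.1.le n))
  · filter_upwards [hle, tendsto_log_one_div_one_sub.eventually_gt_atTop 0] with z hz hLz
    rw [le_div_iff₀ hLz]
    linarith

theorem tendsto_tsum_mul_log_one_div_one_sub (hc0 : ∀ n, 0 ≤ c n) (hc1 : ∀ n, c n ≤ 1)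
    (hA : Tendsto (fun z => (1 - z) * ∑' n, c n * Real.log n * z ^ n) (𝓝[<] 1) (𝓝 A)) :
    Tendsto (fun z => (∑' n, c n * z ^ n) * ((1 - z) * Real.log (1 / (1 - z)))) (𝓝[<] 1) (𝓝 A) := by
  obtain ⟨U, hU, hle⟩ := exists_tendsto_tsum_mul_log_le hc0 hc1 hA
  have hunit : ∀ᶠ z : ℝ in 𝓝[<] 1, z ∈ Set.Ioo (0 : ℝ) 1 := Ioo_mem_nhdsLT one_pos
  have hsqrt : Tendsto (fun z : ℝ => √z) (𝓝[<] 1) (𝓝[<] 1) := by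
    refine tendsto_nhdsWithin_iff.2 ⟨?_, ?_⟩
    · simpa using (Real.continuous_sqrt.tendsto 1).mono_left nhdsWithin_le_nhds
    · filter_upwards [hunit] with z hz
      exact (Real.sqrt_lt_sqrt hz.1.le hz.2).trans_eq Real.sqrt_one
  have hlower : Tendsto (fun z => (1 - z) * (∑' n, c n * Real.log n * z ^ n) -
      4 * ((1 - √z) * ∑' n, c n * √z ^ n)) (𝓝[<] 1) (𝓝 A) := by
    simpa using hA.sub (((tendsto_one_sub_mul_tsum_zero hc0 hc1 hA).comp hsqrt).const_mul 4)
  refine tendsto_of_tendsto_of_tendsto_of_le_of_le' hlower hU ?_ hle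
  filter_upwards [hunit] with z hz
  have hsqrt0 : 0 ≤ ∑' n, c n * √z ^ n :=
    tsum_nonneg fun n => mul_nonneg (hc0 n) (pow_nonneg (Real.sqrt_nonneg z) n)
  have hsqrt1 : 1 - z ≤ 2 * (1 - √z) := by
    nlinarith [Real.sq_sqrt hz.1.le, sq_nonneg (1 - √z)]
  have hmain := mul_le_mul_of_nonneg_left (tsum_mul_log_mul_pow_le hc0 hc1 hz.1.le hz.2)
    (sub_nonneg.2 hz.2.le)
  linarith [mul_le_mul_of_nonneg_right hsqrt1 hsqrt0]

end LogWeight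

section ResidueClass

open ArithmeticFunction ArithmeticFunction.vonMangoldt

variable {q : ℕ} {a : ZMod q}

lemma sum_norm_residueClass_le (a : ZMod q) (n : ℕ) :
    ∑ k ∈ Finset.Icc 0 n, ‖(residueClass a k : ℂ)‖ ≤ (Real.log 4 + 4) * n :=
  calc ∑ k ∈ Finset.Icc 0 n, ‖(residueClass a k : ℂ)‖ ≤ ∑ k ∈ Finset.Icc 0 n, vonMangoldt k :=
        Finset.sum_le_sum fun k _ => by
          rw [Complex.norm_real, Real.norm_of_nonneg (residueClass_nonneg a k)]
          exact residueClass_le a k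
    _ = Chebyshev.psi n := by rw [Chebyshev.psi_eq_sum_Icc, Nat.floor_natCast]
    _ ≤ (Real.log 4 + 4) * n := Chebyshev.psi_le_const_mul_self n.cast_nonneg

lemma residueClass_le_natCast (a : ZMod q) (n : ℕ) : residueClass a n ≤ n :=
  (residueClass_le a n).trans (vonMangoldt_le_log.trans (Real.log_le_self n.cast_nonneg))

variable [NeZero q]

theorem tendsto_one_sub_mul_tsum_residueClass (ha : IsUnit a) :
    Tendsto (fun z : ℝ => (1 - z) * ∑' n, residueClass a n * z ^ n) (𝓝[<] 1)
      (𝓝 (q.totient : ℝ)⁻¹) := by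
  have hcomplex := tendsto_one_sub_mul_tsum_mul_pow (sum_norm_residueClass_le a)
    (continuousOn_LFunctionResidueClassAux a) (A := (q.totient : ℂ)⁻¹) fun s hs => by
      rw [eqOn_LFunctionResidueClassAux ha hs, add_sub_cancel]
  rw [← tendsto_ofReal_iff]
  push_cast
  exact hcomplex

theorem tendsto_one_sub_mul_tsum_prime_residueClass (ha : IsUnit a) :
    Tendsto (fun z : ℝ => (1 - z) * ∑' n : ℕ, (if n.Prime then residueClass a n else 0) * z ^ n)
      (𝓝[<] 1) (𝓝 (q.totient : ℝ)⁻¹) := by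
  have hnonprime := tendsto_one_sub_mul_tsum_of_summable_div (by simp)
    (summable_residueClass_non_primes_div a)
  have hdiff := (tendsto_one_sub_mul_tsum_residueClass ha).sub hnonprime
  rw [sub_zero] at hdiff
  refine hdiff.congr' ?_
  filter_upwards [Ioo_mem_nhdsLT one_pos] with z hz
  have hres := summable_mul_pow_of_le_natCast (residueClass_nonneg a) (residueClass_le_natCast a)
    hz.1.le hz.2
  have hnon : Summable fun n : ℕ => (if n.Prime then 0 else residueClass a n) * z ^ n := by
    refine summable_mul_pow_of_le_natCast (fun n => ?_) (fun n => ?_) hz.1.le hz.2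
    · split_ifs
      exacts [le_rfl, residueClass_nonneg a n]
    · split_ifs
      exacts [n.cast_nonneg, residueClass_le_natCast a n]
  rw [← mul_sub, ← hres.tsum_sub hnon]
  congr! 3 with n
  split_ifs <;> ring

theorem fOdd_asymptotic_general (ha : IsUnit a) :
    Tendsto (fun z : ℝ => (∑' p : ℕ, if p.Prime ∧ (p : ZMod q) = a then z ^ p else 0) *
      ((1 - z) * Real.log (1 / (1 - z)))) (𝓝[<] 1) (𝓝 (q.totient : ℝ)⁻¹) := by
  have hlog (n : ℕ) : (if n.Prime ∧ (n : ZMod q) = a then (1 : ℝ) else 0) * Real.log n =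
      if n.Prime then residueClass a n else 0 := by
    by_cases hn : n.Prime <;> by_cases hna : (n : ZMod q) = a <;>
      simp [residueClass, hn, hna, vonMangoldt_apply_prime]
  have hprimes := tendsto_one_sub_mul_tsum_prime_residueClass ha
  simp_rw [← hlog] at hprimes
  simpa using tendsto_tsum_mul_log_one_div_one_sub (fun n => by split_ifs <;> simp)
    (fun n => by split_ifs <;> simp) hprimes

end ResidueClass

/-- `f(z) ~ 1/((1−z)·log(1/(1−z)))` as `z → 1⁻`. -/
theorem fOdd_asymptotic :
    Tendsto (fun z : ℝ => fOdd z * ((1 - z) * Real.log (1 / (1 - z))))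
      (𝓝[<] 1) (𝓝 1) := by
  simpa [fOdd, ZMod.natCast_eq_one_iff_odd] using
    fOdd_asymptotic_general (q := 2) isUnit_one
end

section
/- Let f(z) = Σ_{p odd prime} z^p for real 0 < z < 1, with second derivative f″(z) = Σ_{p odd prime} p(p−1)·z^{p−2}. Then f″(z) ~ 2/((1−z)³·log(1/(1−z))) as z → 1⁻. -/
open Filter Topology Asymptotics MeasureTheory

/-!
Writing `z = exp (-x)` and `u = log (p * x)`, the sum `∑ p ^ (s - 1) * exp (-p * x)` over odd primes
is `x ^ (-s)` times the mean of the kernel `exp (s * u - exp u)` over the points `log p` with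
weights `1 / p`, centred at `log (1 / x)`. This kernel is a Schwartz function with integral `Γ(s)`,
so it suffices to prove a Wiener–Ikehara theorem for logarithmic means of Schwartz kernels.

Chebyshev's bound makes these means uniformly bounded in terms of the quadratic decay of the kernel,
hence one may assume that the kernel is the Fourier transform of a compactly supported smooth
function. For such a kernel the mean is, up to the main term, a Fourier integral of the Dirichlet
series minus its pole along `Re s = 1`, where it is continuous, and Riemann–Lebesgue applies.

The theorem concerns the weights `log p`; passing to the weights `1` amounts to replacing `log p` by
`log (1 / x)`, at the cost of the mean of the kernel `u * K u` with weights that are `o(log p)`.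
-/

open scoped SchwartzMap FourierTransform ContDiff

section SchwartzDensity

variable {E F : Type*} [NormedAddCommGroup E] [NormedSpace ℝ E] [HasContDiffBump E]
  [FiniteDimensional ℝ E] [NormedAddCommGroup F] [NormedSpace ℝ F]

theorem exists_norm_iteratedFDeriv_one_sub_bump_le (χ : ContDiffBump (0 : E)) (i : ℕ) :
    ∃ M : ℝ, ∀ t ∈ Set.Ioc (0 : ℝ) 1, ∀ x : E,
      ‖iteratedFDeriv ℝ i (fun x ↦ 1 - χ (t • x)) x‖ ≤ t * M * (1 + ‖x‖) := by
  have hχ : ContDiff ℝ i χ := χ.contDiff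
  rcases eq_or_ne i 0 with rfl | hi
  · refine ⟨χ.rIn⁻¹, fun t ht x ↦ ?_⟩
    have hr := χ.rIn_pos
    rw [norm_iteratedFDeriv_zero, Real.norm_of_nonneg (sub_nonneg.2 χ.le_one)]
    have hbound : 1 - χ (t • x) ≤ χ.rIn⁻¹ * ‖t • x‖ := by
      rcases le_or_gt ‖t • x‖ χ.rIn with hx | hx
      · rw [χ.one_of_mem_closedBall (by simpa using hx), sub_self]
        positivity
      · rw [inv_mul_eq_div]
        linarith [χ.nonneg' (t • x), (one_le_div hr).2 hx.le]
    rw [norm_smul, Real.norm_of_nonneg ht.1.le] at hbound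
    have := ht.1
    nlinarith [inv_pos.2 hr, mul_pos ht.1 (inv_pos.2 hr)]
  · obtain ⟨M, hM⟩ := (hχ.continuous_iteratedFDeriv le_rfl).bounded_above_of_compact_support
      (χ.hasCompactSupport.iteratedFDeriv (𝕜 := ℝ) i)
    refine ⟨M, fun t ht x ↦ ?_⟩
    have hM0 : 0 ≤ M := (norm_nonneg _).trans (hM 0)
    have hderiv : iteratedFDeriv ℝ i (fun x ↦ 1 - χ (t • x)) x
        = -(t ^ i • iteratedFDeriv ℝ i χ (t • x)) := by
      have hχt : ContDiffAt ℝ i (fun x ↦ χ (t • x)) x :=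
        (hχ.comp (contDiff_const_smul t)).contDiffAt
      rw [fun_iteratedFDeriv_sub_apply contDiffAt_const hχt,
        iteratedFDeriv_const_of_ne hi, iteratedFDeriv_comp_const_smul t hχ]
      simp
    rw [hderiv, norm_neg, norm_smul, norm_pow, Real.norm_of_nonneg ht.1.le]
    calc t ^ i * ‖iteratedFDeriv ℝ i χ (t • x)‖ ≤ t * M :=
          mul_le_mul (pow_le_of_le_one ht.1.le ht.2 hi) (hM _) (norm_nonneg _) ht.1.le
      _ ≤ t * M * (1 + ‖x‖) :=
          le_mul_of_one_le_right (mul_nonneg ht.1.le hM0) (by linarith [norm_nonneg x])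

/-- The Schwartz function `x ↦ χ (x / (N + 1)) • f x`, a compactly supported approximation
of `f`. -/
noncomputable def schwartzTruncation (χ : ContDiffBump (0 : E)) (f : 𝓢(E, F)) (N : ℕ) : 𝓢(E, F) :=
  ((χ.hasCompactSupport.comp_smul (c := 1 / ((N : ℝ) + 1)) (by positivity)).smul_right
    (f' := f)).toSchwartzMap ((χ.contDiff.comp (contDiff_const_smul _)).smul (f.smooth ⊤))

theorem hasCompactSupport_schwartzTruncation (χ : ContDiffBump (0 : E)) (f : 𝓢(E, F)) (N : ℕ) :
    HasCompactSupport (schwartzTruncation χ f N) :=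
  (χ.hasCompactSupport.comp_smul (by positivity)).smul_right

theorem exists_seminorm_sub_schwartzTruncation_le (χ : ContDiffBump (0 : E)) (f : 𝓢(E, F))
    (k n : ℕ) :
    ∃ C : ℝ, ∀ N : ℕ,
      SchwartzMap.seminorm ℝ k n (schwartzTruncation χ f N - f) ≤ 1 / ((N : ℝ) + 1) * C := by
  choose M hM using exists_norm_iteratedFDeriv_one_sub_bump_le χ
  let S (m i : ℕ) : ℝ := SchwartzMap.seminorm ℝ m (n - i) f
  let C : ℝ := ∑ i ∈ Finset.range (n + 1), n.choose i * M i * (S k i + S (k + 1) i)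
  refine ⟨C, fun N ↦ ?_⟩
  set t : ℝ := 1 / ((N : ℝ) + 1)
  have ht : t ∈ Set.Ioc (0 : ℝ) 1 := ⟨by positivity, div_le_one_of_le₀ (by simp) (by positivity)⟩
  have hcutoff : ContDiff ℝ n fun x ↦ 1 - χ (t • x) :=
    contDiff_const.sub (χ.contDiff.comp (contDiff_const_smul t))
  have hcoe : ⇑(schwartzTruncation χ f N - f) = -fun x ↦ (1 - χ (t • x)) • f x := by
    ext x
    simp [schwartzTruncation, sub_smul, t]
  have hbound (x : E) :
      ‖x‖ ^ k * ‖iteratedFDeriv ℝ n (schwartzTruncation χ f N - f) x‖ ≤ t * C := by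
    rw [hcoe, iteratedFDeriv_neg_apply, norm_neg]
    grw [norm_iteratedFDeriv_smul_le hcutoff (f.smooth n) x le_rfl]
    rw [Finset.mul_sum, Finset.mul_sum]
    refine Finset.sum_le_sum fun i _ ↦ ?_
    have hMi : 0 ≤ t * M i := by simpa using (norm_nonneg _).trans (hM i t ht 0)
    have hdecay : (1 + ‖x‖) * (‖x‖ ^ k * ‖iteratedFDeriv ℝ (n - i) f x‖) ≤ S k i + S (k + 1) i := by
      have := f.le_seminorm ℝ k (n - i) x
      have := f.le_seminorm ℝ (k + 1) (n - i) x
      rw [pow_succ] at this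
      linarith
    calc ‖x‖ ^ k * (n.choose i * ‖iteratedFDeriv ℝ i (fun x ↦ 1 - χ (t • x)) x‖
          * ‖iteratedFDeriv ℝ (n - i) f x‖)
        ≤ ‖x‖ ^ k * (n.choose i * (t * M i * (1 + ‖x‖)) * ‖iteratedFDeriv ℝ (n - i) f x‖) := by
          gcongr
          exact hM i t ht x
      _ = n.choose i * (t * M i) * ((1 + ‖x‖) * (‖x‖ ^ k * ‖iteratedFDeriv ℝ (n - i) f x‖)) := by
          ring
      _ ≤ n.choose i * (t * M i) * (S k i + S (k + 1) i) := by gcongr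
      _ = t * (n.choose i * M i * (S k i + S (k + 1) i)) := by ring
  exact SchwartzMap.seminorm_le_bound ℝ k n _
    ((by positivity : (0 : ℝ) ≤ _).trans (hbound 0)) hbound

theorem tendsto_schwartzTruncation (χ : ContDiffBump (0 : E)) (f : 𝓢(E, F)) :
    Tendsto (schwartzTruncation χ f) atTop (𝓝 f) := by
  refine ((schwartz_withSeminorms ℝ E F).tendsto_nhds _ f).2 fun ⟨k, n⟩ ε hε ↦ ?_
  obtain ⟨C, hC⟩ := exists_seminorm_sub_schwartzTruncation_le χ f k n
  have hlim := (tendsto_one_div_add_atTop_nhds_zero_nat (𝕜 := ℝ)).mul_const C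
  rw [zero_mul] at hlim
  filter_upwards [hlim.eventually_lt_const hε] with N hN
  exact (hC N).trans_lt hN

variable (E F) in
theorem dense_setOf_hasCompactSupport_schwartzMap :
    Dense {f : 𝓢(E, F) | HasCompactSupport f} := fun f ↦
  mem_closure_of_tendsto (tendsto_schwartzTruncation default f)
    (.of_forall (hasCompactSupport_schwartzTruncation default f))

end SchwartzDensity

/-- Chebyshev's bound for the weights `a`: the sum of `|a n|` over `n ≤ N` is at most `c * N`. -/
def ChebyshevBound (a : ℕ → ℝ) (c : ℝ) : Prop :=
  ∀ N : ℕ, ∑ n ∈ Finset.Icc 0 N, |a n| ≤ c * N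

theorem norm_le_of_norm_le_mul_inv_one_add_sq {E : Type*} [NormedAddCommGroup E] {K : ℝ → E}
    {C : ℝ} (hK : ∀ u, ‖K u‖ ≤ C * (1 + u ^ 2)⁻¹) (u : ℝ) : ‖K u‖ ≤ C := by
  have hC : 0 ≤ C := by simpa using (norm_nonneg _).trans (hK 0)
  exact (hK u).trans (mul_le_of_le_one_right hC (inv_le_one_of_one_le₀ (by nlinarith)))

section LogMean

variable {E : Type*} [NormedAddCommGroup E] [NormedSpace ℝ E] {K : ℝ → E} {C : ℝ}

/-- The mean of the kernel `K` around `y` on the logarithmic scale, with weight `a n / n` at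
`log n`. The term at `n = 0` vanishes because `a 0 / 0 = 0`. -/
noncomputable def logMean (a : ℕ → ℝ) (K : ℝ → E) (y : ℝ) : E :=
  ∑' n : ℕ, (a n / n) • K (Real.log n - y)

theorem inv_one_add_sq_le_three_mul {u s : ℝ} (hus : u ≤ s) (hsu : s ≤ u + 1) :
    (1 + u ^ 2)⁻¹ ≤ 3 * (1 + s ^ 2)⁻¹ := by
  rw [← div_eq_mul_inv, inv_eq_one_div, div_le_div_iff₀ (by positivity) (by positivity)]
  nlinarith [mul_nonneg (sub_nonneg.2 hus) (sub_nonneg.2 hsu), sq_nonneg (u - 1), sq_nonneg s]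

theorem integral_inv_one_add_sub_sq (y : ℝ) : ∫ s : ℝ, (1 + (s - y) ^ 2)⁻¹ = Real.pi := by
  rw [integral_sub_right_eq_self fun s : ℝ ↦ (1 + s ^ 2)⁻¹, integral_univ_inv_one_add_sq]

theorem logMean_add_weight {a b : ℕ → ℝ} {y : ℝ}
    (ha : Summable fun n : ℕ ↦ (a n / n) • K (Real.log n - y))
    (hb : Summable fun n : ℕ ↦ (b n / n) • K (Real.log n - y)) :
    logMean (fun n ↦ a n + b n) K y = logMean a K y + logMean b K y := by
  simp only [logMean, add_div, add_smul]
  exact ha.tsum_add hb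

theorem norm_logMean_term_le (a : ℕ → ℝ) (hK : ∀ u, ‖K u‖ ≤ C * (1 + u ^ 2)⁻¹) (y : ℝ) (n : ℕ) :
    ‖(a n / n) • K (Real.log n - y)‖ ≤ C * (|a n| / n * (1 + (Real.log n - y) ^ 2)⁻¹) := by
  rw [norm_smul, Real.norm_eq_abs, abs_div, Nat.abs_cast, mul_left_comm]
  gcongr
  exact hK _

section Summable

variable [CompleteSpace E] {a : ℕ → ℝ}

theorem summable_logMean_of_summable (ha : Summable fun n ↦ a n / n)
    (hK : ∀ u, ‖K u‖ ≤ C * (1 + u ^ 2)⁻¹) (y : ℝ) :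
    Summable fun n : ℕ ↦ (a n / n) • K (Real.log n - y) := by
  refine .of_norm_bounded (ha.norm.mul_right C) fun n ↦ ?_
  grw [norm_smul, norm_le_of_norm_le_mul_inv_one_add_sq hK]

theorem tendsto_logMean_zero_of_summable (ha : Summable fun n ↦ a n / n)
    (hK : ∀ u, ‖K u‖ ≤ C * (1 + u ^ 2)⁻¹) : Tendsto (logMean a K) atTop (𝓝 0) := by
  have hW : Tendsto (fun u : ℝ ↦ C * (1 + u ^ 2)⁻¹) atBot (𝓝 0) := by
    have hsq : Tendsto (fun u : ℝ ↦ 1 + u ^ 2) atBot atTop :=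
      tendsto_atTop_add_const_left _ 1 <| by
        simpa [Function.comp_def] using
          (tendsto_pow_atTop two_ne_zero).comp (tendsto_abs_atBot_atTop (G := ℝ))
    simpa using hsq.inv_tendsto_atTop.const_mul C
  have hK0 : Tendsto K atBot (𝓝 0) := squeeze_zero_norm hK hW
  have hterm (n : ℕ) : Tendsto (fun y ↦ (a n / n) • K (Real.log n - y)) atTop (𝓝 0) := by
    have hshift : Tendsto (fun y ↦ Real.log n - y) atTop atBot :=
      tendsto_atBot_add_const_left _ (Real.log n) tendsto_neg_atTop_atBot
    simpa using (hK0.comp hshift).const_smul (a n / n)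
  rw [← tsum_zero (α := E) (β := ℕ)]
  refine tendsto_tsum_of_dominated_convergence (ha.norm.mul_right C) hterm (.of_forall fun y n ↦ ?_)
  grw [norm_smul, norm_le_of_norm_le_mul_inv_one_add_sq hK]

end Summable

namespace ChebyshevBound

variable {a : ℕ → ℝ} {c : ℝ}

theorem mono {b : ℕ → ℝ} (ha : ChebyshevBound a c) (hba : ∀ n, |b n| ≤ |a n|) :
    ChebyshevBound b c :=
  fun N ↦ (Finset.sum_le_sum fun n _ ↦ hba n).trans (ha N)

theorem const_mul (ha : ChebyshevBound a c) (r : ℝ) :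
    ChebyshevBound (fun n ↦ r * a n) (|r| * c) := fun N ↦ by
  simp only [abs_mul, ← Finset.mul_sum]
  grw [ha N, mul_assoc]

theorem const_nonneg (ha : ChebyshevBound a c) : 0 ≤ c := by
  simpa using (Finset.sum_nonneg fun n _ ↦ abs_nonneg (a n)).trans (ha 1)

theorem sum_filter_abs_div_le (ha : ChebyshevBound a c) (S : Finset ℕ) (s : ℝ) :
    ∑ n ∈ S with s ∈ Set.Icc (Real.log (n : ℕ)) (Real.log n + 1), |a n| / n
      ≤ Real.exp 1 * c := by
  set T := S.filter fun n : ℕ ↦ s ∈ Set.Icc (Real.log n) (Real.log n + 1)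
  have hterm (n : ℕ) (hn : n ∈ T) :
      n ∈ Finset.Icc 0 ⌊Real.exp s⌋₊ ∧ |a n| / n ≤ |a n| * Real.exp (1 - s) := by
    obtain ⟨-, hlow, hupp⟩ := Finset.mem_filter.1 hn
    rcases n.eq_zero_or_pos with rfl | hn0
    · simp only [Finset.mem_Icc, Nat.zero_le, Nat.cast_zero, div_zero, true_and]
      positivity
    have hn0 : (0 : ℝ) < n := mod_cast hn0
    have hexp : (n : ℝ)⁻¹ ≤ Real.exp (1 - s) := by
      rw [← Real.exp_log (inv_pos.2 hn0), Real.log_inv, Real.exp_le_exp]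
      linarith
    exact ⟨Finset.mem_Icc.2 ⟨n.zero_le, Nat.le_floor ((Real.log_le_iff_le_exp hn0).1 hlow)⟩,
      mul_le_mul_of_nonneg_left hexp (abs_nonneg _)⟩
  calc ∑ n ∈ T, |a n| / n
      ≤ ∑ n ∈ Finset.Icc 0 ⌊Real.exp s⌋₊, |a n| * Real.exp (1 - s) :=
        (Finset.sum_le_sum fun n hn ↦ (hterm n hn).2).trans
          (Finset.sum_le_sum_of_subset_of_nonneg (fun n hn ↦ (hterm n hn).1)
            fun n _ _ ↦ by positivity)
    _ ≤ c * ⌊Real.exp s⌋₊ * Real.exp (1 - s) := by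
        grw [← Finset.sum_mul, ha ⌊Real.exp s⌋₊]
    _ ≤ c * Real.exp s * Real.exp (1 - s) := by
        have := ha.const_nonneg
        grw [Nat.floor_le (Real.exp_nonneg s)]
    _ = Real.exp 1 * c := by
        rw [mul_assoc, ← Real.exp_add, add_sub_cancel, mul_comm]

theorem sum_abs_div_mul_inv_one_add_sq_le (ha : ChebyshevBound a c) (y : ℝ) (S : Finset ℕ) :
    ∑ n ∈ S, |a n| / n * (1 + (Real.log n - y) ^ 2)⁻¹ ≤ 3 * (Real.exp 1 * c) * Real.pi := by
  let W (s : ℝ) : ℝ := (1 + (s - y) ^ 2)⁻¹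
  let I (n : ℕ) : Set ℝ := Set.Icc (Real.log n) (Real.log n + 1)
  have hW : Integrable W := integrable_inv_one_add_sq.comp_sub_right y
  have hint (n : ℕ) : Integrable fun s ↦ |a n| / n * (I n).indicator W s :=
    (hW.indicator measurableSet_Icc).const_mul _
  have hwindow (n : ℕ) : W (Real.log n) ≤ 3 * ∫ s, (I n).indicator W s := by
    rw [integral_indicator measurableSet_Icc, ← integral_const_mul]
    calc W (Real.log n) = ∫ _ in I n, W (Real.log n) := by simp [I]
      _ ≤ ∫ s in I n, 3 * W s := by
        refine setIntegral_mono_on (by simp [I]) (hW.const_mul 3).integrableOn measurableSet_Icc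
          fun s hs ↦ inv_one_add_sq_le_three_mul ?_ ?_ <;> linarith [hs.1, hs.2]
  calc ∑ n ∈ S, |a n| / n * W (Real.log n)
      ≤ ∑ n ∈ S, |a n| / n * (3 * ∫ s, (I n).indicator W s) := by
        gcongr with n
        exact hwindow n
    _ = 3 * ∫ s, ∑ n ∈ S, |a n| / n * (I n).indicator W s := by
        rw [integral_finsetSum _ fun n _ ↦ hint n, Finset.mul_sum]
        simp only [integral_const_mul]
        exact Finset.sum_congr rfl fun n _ ↦ by ring
    _ ≤ 3 * ∫ s, Real.exp 1 * c * W s := by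
        gcongr ?_ * ?_
        refine integral_mono (integrable_finsetSum _ fun n _ ↦ hint n) (hW.const_mul _) fun s ↦ ?_
        calc ∑ n ∈ S, |a n| / n * (I n).indicator W s
            = (∑ n ∈ S with s ∈ I n, |a n| / n) * W s := by
              rw [Finset.sum_filter, Finset.sum_mul]
              refine Finset.sum_congr rfl fun n _ ↦ ?_
              by_cases hs : s ∈ I n <;> simp [hs]
          _ ≤ Real.exp 1 * c * W s :=
              mul_le_mul_of_nonneg_right (ha.sum_filter_abs_div_le S s) (by positivity)
    _ = 3 * (Real.exp 1 * c) * Real.pi := by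
        rw [integral_const_mul, integral_inv_one_add_sub_sq]
        ring

theorem summable_abs_div_mul_inv_one_add_sq (ha : ChebyshevBound a c) (y : ℝ) :
    Summable fun n : ℕ ↦ |a n| / n * (1 + (Real.log n - y) ^ 2)⁻¹ :=
  summable_of_sum_le
    (fun n ↦ by positivity)
    (ha.sum_abs_div_mul_inv_one_add_sq_le y)

theorem norm_logMean_le (ha : ChebyshevBound a c) (hK : ∀ u, ‖K u‖ ≤ C * (1 + u ^ 2)⁻¹)
    (y : ℝ) : ‖logMean a K y‖ ≤ C * (3 * (Real.exp 1 * c) * Real.pi) := by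
  have hC : 0 ≤ C := by simpa using (norm_nonneg _).trans (hK 0)
  grw [logMean, tsum_of_norm_bounded ((ha.summable_abs_div_mul_inv_one_add_sq y).mul_left C).hasSum
    (norm_logMean_term_le a hK y), tsum_mul_left]
  refine mul_le_mul_of_nonneg_left ?_ hC
  exact (ha.summable_abs_div_mul_inv_one_add_sq y).tsum_le_of_sum_le
    (ha.sum_abs_div_mul_inv_one_add_sq_le y)

theorem summable_logMean [CompleteSpace E] (ha : ChebyshevBound a c)
    (hK : ∀ u, ‖K u‖ ≤ C * (1 + u ^ 2)⁻¹) (y : ℝ) :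
    Summable fun n : ℕ ↦ (a n / n) • K (Real.log n - y) :=
  .of_norm_bounded ((ha.summable_abs_div_mul_inv_one_add_sq y).mul_left C)
    (norm_logMean_term_le a hK y)

theorem exists_summable_add_chebyshevBound (ha : ChebyshevBound a c) {β : ℕ → ℝ}
    (hβ : Tendsto β atTop (𝓝 0)) {η : ℝ} (hη : 0 < η) :
    ∃ head tail : ℕ → ℝ, (fun n ↦ β n * a n) = (fun n ↦ head n + tail n) ∧
      (Summable fun n ↦ head n / n) ∧ ChebyshevBound tail (η * c) := by
  obtain ⟨N, hN⟩ := eventually_atTop.1 (Metric.tendsto_nhds.1 hβ η hη)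
  refine ⟨fun n ↦ if n < N then β n * a n else 0, fun n ↦ if n < N then 0 else β n * a n,
    ?_, ?_, ?_⟩
  · ext n
    by_cases hn : n < N <;> simp [hn]
  · exact summable_of_ne_finset_zero (s := Finset.range N) fun n hn ↦ by
      simp [Finset.mem_range.not.1 hn]
  · rw [← abs_of_pos hη]
    refine (ha.const_mul η).mono fun n ↦ ?_
    by_cases hn : n < N
    · simp [hn, mul_nonneg]
    · have hβn := (hN n (not_lt.1 hn)).le
      rw [dist_zero_right, Real.norm_eq_abs] at hβn
      simp only [hn, if_false, abs_mul, abs_of_pos hη]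
      gcongr

theorem tendsto_logMean_mul_zero [CompleteSpace E] (ha : ChebyshevBound a c) {β : ℕ → ℝ}
    (hβ : Tendsto β atTop (𝓝 0)) (hK : ∀ u, ‖K u‖ ≤ C * (1 + u ^ 2)⁻¹) :
    Tendsto (logMean (fun n ↦ β n * a n) K) atTop (𝓝 0) := by
  have hC : 0 ≤ C := by simpa using (norm_nonneg _).trans (hK 0)
  have hc := ha.const_nonneg
  set B := C * (3 * (Real.exp 1 * c) * Real.pi)
  have hB : 0 ≤ B := by positivity
  refine Metric.tendsto_nhds.2 fun ε hε ↦ ?_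
  let η := ε / (2 * (B + 1))
  have hη : 0 < η := by positivity
  obtain ⟨head, tail, hsplit, hhead, htail⟩ := ha.exists_summable_add_chebyshevBound hβ hη
  filter_upwards [Metric.tendsto_nhds.1 (tendsto_logMean_zero_of_summable hhead hK) (ε / 2)
    (half_pos hε)] with y hy
  rw [dist_zero_right] at hy ⊢
  rw [hsplit, logMean_add_weight (summable_logMean_of_summable hhead hK y)
    (htail.summable_logMean hK y)]
  calc ‖logMean head K y + logMean tail K y‖ ≤ ‖logMean head K y‖ + ‖logMean tail K y‖ :=
        norm_add_le _ _
    _ < ε / 2 + η * (B + 1) := by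
        refine add_lt_add_of_lt_of_le hy ((htail.norm_logMean_le hK y).trans ?_)
        simp only [B]
        nlinarith
    _ = ε := by
        simp only [η]
        field_simp
        norm_num

end ChebyshevBound

end LogMean

section LSeriesFourier

variable {a : ℕ → ℂ} {h : ℝ → ℂ} {σ : ℝ}

theorem LSeries_term_mul_fourier_log (a : ℕ → ℂ) (h : ℝ → ℂ) (σ : ℝ) (n : ℕ) :
    LSeries.term a σ n * 𝓕 h (Real.log n)
      = ∫ t : ℝ, LSeries.term a (σ + 2 * Real.pi * Complex.I * t) n * h t := by
  rcases eq_or_ne n 0 with rfl | hn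
  · simp
  rw [Real.fourier_real_eq_integral_exp_smul, ← integral_const_mul]
  congr 1
  ext t
  have hn0 : (n : ℂ) ≠ 0 := Nat.cast_ne_zero.2 hn
  have hexp : Complex.exp (↑(-2 * Real.pi * t * Real.log n) * Complex.I)
      = ((n : ℂ) ^ (2 * Real.pi * Complex.I * t))⁻¹ := by
    rw [Complex.cpow_def_of_ne_zero hn0, ← Complex.exp_neg, ← Complex.natCast_log]
    push_cast
    ring_nf
  rw [LSeries.term_of_ne_zero hn, LSeries.term_of_ne_zero hn, Complex.cpow_add _ _ hn0, hexp,
    smul_eq_mul]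
  ring

theorem continuous_LSeries_term (a : ℕ → ℂ) (n : ℕ) : Continuous fun s ↦ LSeries.term a s n :=
  continuous_iff_continuousAt.2 fun s ↦ (LSeries.hasDerivAt_term a n s).continuousAt

theorem norm_LSeries_term_add_mul_I (a : ℕ → ℂ) (σ t : ℝ) (n : ℕ) :
    ‖LSeries.term a (σ + 2 * Real.pi * Complex.I * t) n‖ = ‖LSeries.term a σ n‖ := by
  simp [LSeries.norm_term_eq]

theorem tsum_LSeries_term_mul_fourier_log (ha : LSeriesSummable a σ) (hh : Integrable h) :
    ∑' n, LSeries.term a σ n * 𝓕 h (Real.log n)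
      = ∫ t : ℝ, LSeries a (σ + 2 * Real.pi * Complex.I * t) * h t := by
  simp only [LSeries_term_mul_fourier_log, LSeries, ← tsum_mul_right]
  refine (hasSum_integral_of_summable_integral_norm (fun n ↦ ?_) ?_).tsum_eq
  · refine hh.bdd_mul (c := ‖LSeries.term a σ n‖) ?_ (.of_forall fun t ↦ ?_)
    · exact ((continuous_LSeries_term a n).comp (by fun_prop)).aestronglyMeasurable
    · rw [norm_LSeries_term_add_mul_I]
  · simp only [norm_mul, norm_LSeries_term_add_mul_I, integral_const_mul]
    exact ha.norm.mul_right _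

theorem fourier_indicator_Ioi_exp_neg_mul {δ : ℝ} (hδ : 0 < δ) (t : ℝ) :
    𝓕 ((Set.Ioi (0 : ℝ)).indicator fun u : ℝ ↦ Complex.exp (-δ * u)) t
      = (δ + 2 * Real.pi * Complex.I * t)⁻¹ := by
  rw [Real.fourier_real_eq_integral_exp_smul]
  have hre : (-(δ + 2 * Real.pi * Complex.I * t)).re < 0 := by simpa using hδ
  calc _ = ∫ u : ℝ in Set.Ioi 0, Complex.exp (-(δ + 2 * Real.pi * Complex.I * t) * u) := by
        rw [← integral_indicator measurableSet_Ioi]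
        congr 1
        ext u
        by_cases hu : u ∈ Set.Ioi (0 : ℝ)
        · simp only [hu, Set.indicator_of_mem, smul_eq_mul, ← Complex.exp_add]
          push_cast
          ring_nf
        · simp [hu]
    _ = _ := by
        rw [integral_exp_mul_complex_Ioi hre]
        simp only [Complex.ofReal_zero, mul_zero, Complex.exp_zero, neg_div_neg_eq, one_div]

theorem setIntegral_Ioi_exp_neg_mul_fourier {δ : ℝ} (hδ : 0 < δ) (hh : Integrable h) :
    ∫ u in Set.Ioi (0 : ℝ), Complex.exp (-δ * u) * 𝓕 h u
      = ∫ t : ℝ, (δ + 2 * Real.pi * Complex.I * t)⁻¹ * h t := by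
  have hexp : Integrable ((Set.Ioi (0 : ℝ)).indicator fun u : ℝ ↦ Complex.exp (-δ * u)) :=
    (integrableOn_exp_mul_complex_Ioi (by simpa using hδ) 0).integrable_indicator measurableSet_Ioi
  have hflip := VectorFourier.integral_fourierIntegral_smul_eq_flip (L := innerₗ ℝ)
    (μ := volume) (ν := volume) Real.continuous_fourierChar continuous_inner hh hexp
  rw [flip_innerₗ] at hflip
  change ∫ ξ, 𝓕 h ξ • _ = ∫ x, h x • 𝓕 (_ : ℝ → ℂ) x at hflip
  simp only [fourier_indicator_Ioi_exp_neg_mul hδ, smul_eq_mul] at hflip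
  rw [← integral_indicator measurableSet_Ioi]
  simp only [mul_comm _ (h _), ← hflip]
  congr 1
  ext u
  by_cases hu : u ∈ Set.Ioi (0 : ℝ) <;> simp [hu, mul_comm]

theorem LSeries_term_one (a : ℕ → ℂ) (n : ℕ) : LSeries.term a 1 n = a n / n := by
  rcases eq_or_ne n 0 with rfl | hn
  · simp
  · simp [LSeries.term_of_ne_zero hn]

theorem tendsto_tsum_LSeries_term_mul {w : ℕ → ℂ} (hw : Summable fun n ↦ a n / n * w n) :
    Tendsto (fun σ : ℝ ↦ ∑' n, LSeries.term a σ n * w n) (𝓝[>] 1) (𝓝 (∑' n, a n / n * w n)) := by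
  simp only [← LSeries_term_one] at hw ⊢
  refine tendsto_tsum_of_dominated_convergence hw.norm (fun n ↦ ?_) ?_
  · have hcont : Continuous fun σ : ℝ ↦ LSeries.term a σ n * w n :=
      ((continuous_LSeries_term a n).comp Complex.continuous_ofReal).mul continuous_const
    simpa using (hcont.tendsto 1).mono_left nhdsWithin_le_nhds
  · filter_upwards [self_mem_nhdsWithin] with σ hσ n
    rw [norm_mul, norm_mul]
    gcongr
    exact LSeries.norm_term_le_of_re_le_re a (by simpa using (Set.mem_Ioi.1 hσ).le) n

theorem tendsto_setIntegral_Ioi_exp_neg_mul (hh : IntegrableOn h (Set.Ioi 0)) :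
    Tendsto (fun σ : ℝ ↦ ∫ u in Set.Ioi (0 : ℝ), Complex.exp (-(σ - 1 : ℝ) * u) * h u) (𝓝[>] 1)
      (𝓝 (∫ u in Set.Ioi (0 : ℝ), h u)) := by
  refine tendsto_integral_filter_of_dominated_convergence (fun u ↦ ‖h u‖) (.of_forall fun σ ↦ ?_)
    ?_ hh.norm (.of_forall fun u ↦ ?_)
  · exact (by fun_prop : Continuous fun u : ℝ ↦ Complex.exp (-(σ - 1 : ℝ) * u)).aestronglyMeasurable
      |>.mul hh.aestronglyMeasurable
  · filter_upwards [self_mem_nhdsWithin] with σ hσ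
    filter_upwards [self_mem_ae_restrict measurableSet_Ioi] with u hu
    rw [norm_mul, Complex.norm_exp]
    refine mul_le_of_le_one_left (norm_nonneg _) (Real.exp_le_one_iff.2 ?_)
    have := mul_pos (sub_pos.2 (Set.mem_Ioi.1 hσ)) (Set.mem_Ioi.1 hu)
    norm_cast
    linarith
  · have hcont : Continuous fun σ : ℝ ↦ Complex.exp (-(σ - 1 : ℝ) * u) * h u := by fun_prop
    simpa using (hcont.tendsto 1).mono_left nhdsWithin_le_nhds

theorem tsum_fourier_log_sub_setIntegral_fourier {A : ℂ} {G : ℂ → ℂ}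
    (hG : ContinuousOn G {s | 1 ≤ s.re})
    (hGa : ∀ s : ℂ, 1 < s.re → G s = LSeries a s - A / (s - 1))
    (ha : ∀ s : ℂ, 1 < s.re → LSeriesSummable a s) (hh : Continuous h) (hhc : HasCompactSupport h)
    (hsum : Summable fun n : ℕ ↦ a n / n * 𝓕 h (Real.log n))
    (hint : IntegrableOn (𝓕 h) (Set.Ioi 0)) :
    ∑' n : ℕ, a n / n * 𝓕 h (Real.log n) - A * ∫ u in Set.Ioi (0 : ℝ), 𝓕 h u
      = ∫ t : ℝ, G (1 + 2 * Real.pi * Complex.I * t) * h t := by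
  have hhi : Integrable h := hh.integrable_of_hasCompactSupport hhc
  let F (σ t : ℝ) : ℂ := G (σ + 2 * Real.pi * Complex.I * t) * h t
  have hF : ContinuousOn F.uncurry (Set.Ici 1 ×ˢ Set.univ) :=
    (hG.comp (by fun_prop) fun p hp ↦ by simpa using hp.1).mul (by fun_prop)
  have hright : Tendsto (fun σ : ℝ ↦ ∫ t : ℝ, G (σ + 2 * Real.pi * Complex.I * t) * h t) (𝓝[>] 1)
      (𝓝 (∫ t : ℝ, G (1 + 2 * Real.pi * Complex.I * t) * h t)) := by
    have := continuousOn_integral_of_compact_support (μ := volume) hhc.isCompact hF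
      fun σ t _ ht ↦ by simp only [F, image_eq_zero_of_notMem_tsupport ht, mul_zero]
    simpa [F] using (this 1 Set.self_mem_Ici).mono_left (nhdsWithin_mono _ Set.Ioi_subset_Ici_self)
  refine tendsto_nhds_unique ((tendsto_tsum_LSeries_term_mul hsum).sub
    ((tendsto_setIntegral_Ioi_exp_neg_mul hint).const_mul A)) (hright.congr' ?_)
  filter_upwards [self_mem_nhdsWithin] with σ hσ
  have hσ : 1 < σ := hσ
  have hGi : Integrable (F σ) :=
    (hF.comp_continuous (f := fun t : ℝ ↦ (σ, t)) (by fun_prop)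
      fun t ↦ ⟨hσ.le, trivial⟩).integrable_of_hasCompactSupport hhc.mul_left
  have hpole : Integrable fun t : ℝ ↦ ((σ - 1 : ℝ) + 2 * Real.pi * Complex.I * t)⁻¹ * h t := by
    refine ((Continuous.inv₀ (by fun_prop) fun t ht ↦ ?_).mul
      hh).integrable_of_hasCompactSupport hhc.mul_left
    have hre : σ - 1 = 0 := by simpa using congrArg Complex.re ht
    linarith
  rw [tsum_LSeries_term_mul_fourier_log (ha _ (by simpa)) hhi,
    setIntegral_Ioi_exp_neg_mul_fourier (sub_pos.2 hσ) hhi, eq_sub_iff_add_eq,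
    ← integral_const_mul, ← integral_add hGi (hpole.const_mul A)]
  congr 1
  ext t
  simp only [F]
  rw [hGa _ (by simpa)]
  push_cast
  ring

end LSeriesFourier

theorem ChebyshevBound.lseriesSummable {a : ℕ → ℝ} {c : ℝ} (ha : ChebyshevBound a c) {s : ℂ}
    (hs : 1 < s.re) : LSeriesSummable (fun n ↦ (a n : ℂ)) s := by
  refine LSeriesSummable_of_sum_norm_bigO (r := 1) (.of_bound c (.of_forall fun N ↦ ?_))
    zero_le_one hs
  have hN : ∑ n ∈ Finset.Icc 1 N, ‖(a n : ℂ)‖ ≤ c * N := by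
    simp only [Complex.norm_real, Real.norm_eq_abs]
    exact (Finset.sum_le_sum_of_subset_of_nonneg (Finset.Icc_subset_Icc_left zero_le_one)
      fun _ _ _ ↦ abs_nonneg _).trans (ha N)
  rw [Real.norm_of_nonneg (Finset.sum_nonneg fun n _ ↦ norm_nonneg _)]
  simpa using hN

theorem fourier_exp_mul (g : ℝ → ℂ) (y u : ℝ) :
    𝓕 (fun t : ℝ ↦ Complex.exp (2 * Real.pi * Complex.I * y * t) * g t) u = 𝓕 g (u - y) := by
  simp only [Real.fourier_real_eq_integral_exp_smul, smul_eq_mul, ← mul_assoc, ← Complex.exp_add]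
  congr 1
  ext t
  push_cast
  ring_nf

theorem setIntegral_Ioi_comp_sub {E : Type*} [NormedAddCommGroup E] [NormedSpace ℝ E]
    (K : ℝ → E) (y : ℝ) :
    ∫ u in Set.Ioi 0, K (u - y) = ∫ u in Set.Ioi (-y), K u := by
  have h := (measurePreserving_sub_right volume y).setIntegral_preimage_emb
    (measurableEmbedding_subRight y) K (Set.Ioi (-y))
  rwa [Set.preimage_sub_const_Ioi, neg_add_cancel] at h

theorem integrable_of_norm_le_mul_inv_one_add_sq {E : Type*} [NormedAddCommGroup E] {K : ℝ → E}
    {C : ℝ} (hKm : AEStronglyMeasurable K) (hK : ∀ u, ‖K u‖ ≤ C * (1 + u ^ 2)⁻¹) :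
    Integrable K :=
  (integrable_inv_one_add_sq.const_mul C).mono' hKm (.of_forall hK)

theorem tendsto_integral_exp_mul_atTop_zero (g : ℝ → ℂ) :
    Tendsto (fun y : ℝ ↦ ∫ t : ℝ, Complex.exp (2 * Real.pi * Complex.I * y * t) * g t) atTop
      (𝓝 0) := by
  have hlim := (Real.zero_at_infty_fourier g).comp
    (tendsto_neg_atTop_atBot.mono_right (atBot_le_cocompact (α := ℝ)))
  refine hlim.congr fun y ↦ ?_
  simp only [Function.comp_apply, Real.fourier_real_eq_integral_exp_smul, smul_eq_mul]
  congr 1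
  ext t
  push_cast
  ring_nf

section WienerIkehara

variable {a : ℕ → ℝ} {c A : ℝ} {G : ℂ → ℂ}

theorem tendsto_logMean_fourier (ha : ChebyshevBound a c) (hG : ContinuousOn G {s | 1 ≤ s.re})
    (hGa : ∀ s : ℂ, 1 < s.re → G s = LSeries (fun n ↦ (a n : ℂ)) s - A / (s - 1))
    {g : ℝ → ℂ} {C : ℝ} (hg : Continuous g) (hgc : HasCompactSupport g)
    (hdecay : ∀ u, ‖𝓕 g u‖ ≤ C * (1 + u ^ 2)⁻¹) :
    Tendsto (logMean a (𝓕 g)) atTop (𝓝 (A • ∫ u, 𝓕 g u)) := by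
  have hint : Integrable (𝓕 g) := by
    refine integrable_of_norm_le_mul_inv_one_add_sq ?_ hdecay
    exact (VectorFourier.fourierIntegral_continuous Real.continuous_fourierChar continuous_inner
      (hg.integrable_of_hasCompactSupport hgc)).aestronglyMeasurable
  have hidentity (y : ℝ) : logMean a (𝓕 g) y =
      (∫ t : ℝ, Complex.exp (2 * Real.pi * Complex.I * y * t) *
        (G (1 + 2 * Real.pi * Complex.I * t) * g t)) + A • ∫ u in Set.Ioi (-y), 𝓕 g u := by
    have := tsum_fourier_log_sub_setIntegral_fourier hG hGa (fun s ↦ ha.lseriesSummable)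
      (h := fun t ↦ Complex.exp (2 * Real.pi * Complex.I * y * t) * g t) (by fun_prop) hgc.mul_left
      (by simpa [fourier_exp_mul] using ha.summable_logMean hdecay y)
      (by simpa [funext (fourier_exp_mul g y)] using (hint.comp_sub_right y).integrableOn)
    simp only [fourier_exp_mul, setIntegral_Ioi_comp_sub (𝓕 g), sub_eq_iff_eq_add] at this
    simpa [logMean, mul_left_comm] using this
  have hpole : Tendsto (fun y : ℝ ↦ ∫ u in Set.Ioi (-y), 𝓕 g u) atTop (𝓝 (∫ u, 𝓕 g u)) :=
    (aecover_Ioi tendsto_neg_atTop_atBot).integral_tendsto_of_countably_generated hint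
  rw [funext hidentity, ← zero_add (A • _)]
  exact (tendsto_integral_exp_mul_atTop_zero _).add (hpole.const_smul A)

/-- The seminorm `sup ‖K u‖ + sup ‖u ^ 2 • K u‖`, which controls the logarithmic means of `K`
uniformly in the centre. -/
noncomputable def quadraticDecaySeminorm (E : Type*) [NormedAddCommGroup E] [NormedSpace ℝ E] :
    Seminorm ℝ 𝓢(ℝ, E) :=
  SchwartzMap.seminorm ℝ 0 0 + SchwartzMap.seminorm ℝ 2 0

variable {E : Type*} [NormedAddCommGroup E] [NormedSpace ℝ E]

theorem continuous_quadraticDecaySeminorm : Continuous (quadraticDecaySeminorm E) :=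
  ((schwartz_withSeminorms ℝ ℝ E).continuous_seminorm (0, 0)).add
    ((schwartz_withSeminorms ℝ ℝ E).continuous_seminorm (2, 0))

theorem norm_le_quadraticDecaySeminorm_mul (K : 𝓢(ℝ, E)) (u : ℝ) :
    ‖K u‖ ≤ quadraticDecaySeminorm E K * (1 + u ^ 2)⁻¹ := by
  rw [← div_eq_mul_inv, le_div_iff₀' (by positivity), add_mul, one_mul]
  have hsq := SchwartzMap.norm_pow_mul_le_seminorm ℝ K 2 u
  rw [Real.norm_eq_abs, sq_abs] at hsq
  exact add_le_add (SchwartzMap.norm_le_seminorm ℝ K u) hsq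

theorem logMean_sub_kernel {K K' : ℝ → E} {y : ℝ}
    (hK : Summable fun n : ℕ ↦ (a n / n) • K (Real.log n - y))
    (hK' : Summable fun n : ℕ ↦ (a n / n) • K' (Real.log n - y)) :
    logMean a (fun u ↦ K u - K' u) y = logMean a K y - logMean a K' y := by
  simp only [logMean, smul_sub]
  exact hK.tsum_sub hK'

theorem tendsto_logMean_of_dense [CompleteSpace E] (ha : ChebyshevBound a c) {S : Set 𝓢(ℝ, E)}
    (hS : Dense S) (h : ∀ K ∈ S, Tendsto (logMean a K) atTop (𝓝 (A • ∫ u, K u))) (K : 𝓢(ℝ, E)) :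
    Tendsto (logMean a K) atTop (𝓝 (A • ∫ u, K u)) := by
  have : (𝓝[S] K).NeBot := mem_closure_iff_nhdsWithin_neBot.1 (hS K)
  set B := 3 * (Real.exp 1 * c) * Real.pi
  have hlip (K' : 𝓢(ℝ, E)) (y : ℝ) :
      dist (logMean a K y) (logMean a K' y) ≤ quadraticDecaySeminorm E (K - K') * B := by
    rw [dist_eq_norm, ← logMean_sub_kernel
      (ha.summable_logMean (norm_le_quadraticDecaySeminorm_mul K) y)
      (ha.summable_logMean (norm_le_quadraticDecaySeminorm_mul K') y)]
    exact ha.norm_logMean_le (norm_le_quadraticDecaySeminorm_mul (K - K')) y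
  have hunif : TendstoUniformlyOnFilter (fun (K' : 𝓢(ℝ, E)) ↦ logMean a K') (logMean a K) (𝓝[S] K)
      atTop := by
    have hsmall : Tendsto (fun K' ↦ quadraticDecaySeminorm E (K - K') * B) (𝓝[S] K) (𝓝 0) := by
      have hcont : Continuous fun K' ↦ quadraticDecaySeminorm E (K - K') * B :=
        (continuous_quadraticDecaySeminorm.comp (continuous_const.sub continuous_id)).mul_const B
      simpa using (hcont.tendsto K).mono_left nhdsWithin_le_nhds
    refine Metric.tendstoUniformlyOnFilter_iff.2 fun ε hε ↦ ?_
    exact (hsmall.eventually_lt_const hε).prod_inl _ |>.mono fun p hp ↦ (hlip p.1 p.2).trans_lt hp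
  refine hunif.tendsto_of_eventually_tendsto (eventually_nhdsWithin_of_forall h) ?_
  exact ((((SchwartzMap.integralCLM ℝ volume).continuous.tendsto K).mono_left
    nhdsWithin_le_nhds).const_smul A)

theorem tendsto_logMean_complex_schwartzMap (ha : ChebyshevBound a c)
    (hG : ContinuousOn G {s | 1 ≤ s.re})
    (hGa : ∀ s : ℂ, 1 < s.re → G s = LSeries (fun n ↦ (a n : ℂ)) s - A / (s - 1)) (K : 𝓢(ℝ, ℂ)) :
    Tendsto (logMean a K) atTop (𝓝 (A • ∫ u, K u)) := by
  have hsurj : Function.Surjective (fun g : 𝓢(ℝ, ℂ) ↦ 𝓕 g) := fun K ↦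
    ⟨FourierTransform.fourierInv K, FourierTransform.fourier_fourierInv_eq K⟩
  refine tendsto_logMean_of_dense ha (hsurj.denseRange.dense_image
    ContinuousFourier.continuous_fourier (dense_setOf_hasCompactSupport_schwartzMap ℝ ℂ)) ?_ K
  rintro _ ⟨g, hg, rfl⟩
  exact tendsto_logMean_fourier ha hG hGa g.continuous hg
    (norm_le_quadraticDecaySeminorm_mul (𝓕 g))

theorem ofReal_logMean (a : ℕ → ℝ) (K : ℝ → ℝ) (y : ℝ) :
    ((logMean a K y : ℝ) : ℂ) = logMean a (fun u ↦ (K u : ℂ)) y := by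
  simp [logMean, Complex.ofReal_tsum]

theorem tendsto_logMean_schwartzMap (ha : ChebyshevBound a c)
    (hG : ContinuousOn G {s | 1 ≤ s.re})
    (hGa : ∀ s : ℂ, 1 < s.re → G s = LSeries (fun n ↦ (a n : ℂ)) s - A / (s - 1)) (K : 𝓢(ℝ, ℝ)) :
    Tendsto (logMean a K) atTop (𝓝 (A * ∫ u, K u)) := by
  have h := tendsto_logMean_complex_schwartzMap ha hG hGa
    (SchwartzMap.postcompCLM Complex.ofRealCLM K)
  refine tendsto_ofReal_iff.1 ?_
  simpa [ofReal_logMean, funext (SchwartzMap.postcompCLM_apply _ _), integral_complex_ofReal]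
    using h

end WienerIkehara

section PrimesInResidueClass

open ArithmeticFunction (vonMangoldt)
open ArithmeticFunction.vonMangoldt

variable {q : ℕ} {b : ZMod q}

/-- The indicator function of the primes in the residue class `b` modulo `q`. -/
noncomputable def primeIndicator (b : ZMod q) : ℕ → ℝ :=
  {p : ℕ | p.Prime ∧ (p : ZMod q) = b}.indicator 1

theorem chebyshevBound_vonMangoldt : ChebyshevBound vonMangoldt (Real.log 4 + 4) := fun N ↦ by
  simp only [abs_of_nonneg ArithmeticFunction.vonMangoldt_nonneg]
  simpa [Chebyshev.psi_eq_sum_Icc] using Chebyshev.psi_le_const_mul_self N.cast_nonneg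

theorem chebyshevBound_residueClass (b : ZMod q) :
    ChebyshevBound (residueClass b) (Real.log 4 + 4) :=
  chebyshevBound_vonMangoldt.mono fun n ↦
    abs_le_abs_of_nonneg (residueClass_nonneg b n) (residueClass_le b n)

theorem residueClass_eq_log_mul_primeIndicator_add (b : ZMod q) (n : ℕ) :
    residueClass b n
      = Real.log n * primeIndicator b n + if n.Prime then 0 else residueClass b n := by
  by_cases hn : n.Prime <;> by_cases hb : (n : ZMod q) = b <;>
    simp [primeIndicator, hn, hb, ArithmeticFunction.vonMangoldt_apply_prime]

theorem chebyshevBound_log_mul_primeIndicator (b : ZMod q) :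
    ChebyshevBound (fun n ↦ Real.log n * primeIndicator b n) (Real.log 4 + 4) := by
  refine (chebyshevBound_residueClass b).mono fun n ↦ ?_
  rw [residueClass_eq_log_mul_primeIndicator_add b n]
  by_cases hn : n.Prime <;> simp [primeIndicator, hn]

theorem chebyshevBound_primeIndicator (b : ZMod q) :
    ChebyshevBound (primeIndicator b) (|2| * (Real.log 4 + 4)) := by
  refine ((chebyshevBound_log_mul_primeIndicator b).const_mul 2).mono fun n ↦ ?_
  by_cases hn : n.Prime
  · have hlog : Real.log 2 ≤ Real.log n := by
      gcongr
      exact mod_cast hn.two_le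
    rw [← mul_assoc, abs_mul _ (primeIndicator b n)]
    refine le_mul_of_one_le_left (abs_nonneg _) (le_abs.2 (.inl ?_))
    linarith [Real.log_two_gt_d9]
  · simp [primeIndicator, hn]

theorem tendsto_logMean_primeIndicator_zero (b : ZMod q) (K : 𝓢(ℝ, ℝ)) :
    Tendsto (logMean (primeIndicator b) K) atTop (𝓝 0) := by
  have hlog : Tendsto (fun n : ℕ ↦ (Real.log n)⁻¹) atTop (𝓝 0) :=
    (Real.tendsto_log_atTop.comp tendsto_natCast_atTop_atTop).inv_tendsto_atTop
  convert (chebyshevBound_log_mul_primeIndicator b).tendsto_logMean_mul_zero hlog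
    (norm_le_quadraticDecaySeminorm_mul K) using 2
  ext n
  by_cases hn : n.Prime
  · have hlog0 : Real.log n ≠ 0 := (Real.log_pos (mod_cast hn.one_lt)).ne'
    rw [inv_mul_cancel_left₀ hlog0]
  · simp [primeIndicator, hn]

variable [NeZero q]

theorem tendsto_logMean_residueClass (hb : IsUnit b) (K : 𝓢(ℝ, ℝ)) :
    Tendsto (logMean (residueClass b) K) atTop (𝓝 ((q.totient : ℝ)⁻¹ * ∫ u, K u)) :=
  tendsto_logMean_schwartzMap (chebyshevBound_residueClass b)
    (continuousOn_LFunctionResidueClassAux b)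
    (fun s hs ↦ by simpa using eqOn_LFunctionResidueClassAux hb hs) K

theorem tendsto_logMean_log_mul_primeIndicator (hb : IsUnit b) (K : 𝓢(ℝ, ℝ)) :
    Tendsto (logMean (fun n ↦ Real.log n * primeIndicator b n) K) atTop
      (𝓝 ((q.totient : ℝ)⁻¹ * ∫ u, K u)) := by
  have hK := norm_le_quadraticDecaySeminorm_mul K
  have hprime := chebyshevBound_log_mul_primeIndicator b
  have hnonprime := summable_residueClass_non_primes_div (a := b)
  rw [← sub_zero (_ * _)]
  refine ((tendsto_logMean_residueClass hb K).sub
    (tendsto_logMean_zero_of_summable hnonprime hK)).congr fun y ↦ ?_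
  rw [sub_eq_iff_eq_add, ← logMean_add_weight (hprime.summable_logMean hK y)
    (summable_logMean_of_summable hnonprime hK y)]
  simp only [← residueClass_eq_log_mul_primeIndicator_add]

theorem tendsto_mul_logMean_primeIndicator (hb : IsUnit b) (K : 𝓢(ℝ, ℝ)) :
    Tendsto (fun y ↦ y * logMean (primeIndicator b) K y) atTop
      (𝓝 ((q.totient : ℝ)⁻¹ * ∫ u, K u)) := by
  let K₁ : 𝓢(ℝ, ℝ) := SchwartzMap.smulLeftCLM ℝ (fun u : ℝ ↦ u) K
  have hK₁ (u : ℝ) : K₁ u = u * K u := SchwartzMap.smulLeftCLM_apply_apply (by fun_prop) K u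
  rw [← sub_zero (_ * _)]
  refine ((tendsto_logMean_log_mul_primeIndicator hb K).sub
    (tendsto_logMean_primeIndicator_zero b K₁)).congr fun y ↦ ?_
  have hlog := (chebyshevBound_log_mul_primeIndicator b).summable_logMean
    (norm_le_quadraticDecaySeminorm_mul K) y
  have hone := (chebyshevBound_primeIndicator b).summable_logMean
    (norm_le_quadraticDecaySeminorm_mul K₁) y
  rw [logMean, logMean, logMean, ← hlog.tsum_sub hone, ← tsum_mul_left]
  simp only [hK₁, smul_eq_mul]
  exact tsum_congr fun n ↦ by ring

end PrimesInResidueClass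

section GammaKernel

variable {s : ℝ}

theorem mul_sub_exp_le (hs : 0 < s) (u : ℝ) : s * u - Real.exp u ≤ s * Real.log s - s := by
  have h : s * (u - Real.log s + 1) ≤ s * Real.exp (u - Real.log s) :=
    mul_le_mul_of_nonneg_left (Real.add_one_le_exp _) hs.le
  rw [Real.exp_sub, Real.exp_log hs, mul_div_cancel₀ _ hs.ne'] at h
  linarith

theorem abs_pow_le_mul_exp_add_exp_neg (hs : 0 < s) (k : ℕ) (u : ℝ) :
    |u| ^ k ≤ k.factorial / s ^ k * (Real.exp (s * u) + Real.exp (-(s * u))) := by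
  have h := (Real.pow_div_factorial_le_exp _ (abs_nonneg (s * u)) k).trans (Real.exp_abs_le (s * u))
  rw [div_le_iff₀ (by positivity), abs_mul, mul_pow, abs_of_pos hs] at h
  rw [div_mul_eq_mul_div, le_div_iff₀ (by positivity)]
  linarith

theorem exists_abs_pow_mul_exp_mul_sub_exp_le (hs : 0 < s) (k : ℕ) :
    ∃ C, ∀ u : ℝ, |u| ^ k * Real.exp (s * u - Real.exp u) ≤ C := by
  refine ⟨k.factorial / s ^ k * (Real.exp (2 * s * Real.log (2 * s) - 2 * s) + 1), fun u ↦ ?_⟩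
  calc |u| ^ k * Real.exp (s * u - Real.exp u)
      ≤ k.factorial / s ^ k * (Real.exp (s * u) + Real.exp (-(s * u)))
          * Real.exp (s * u - Real.exp u) := by
        grw [abs_pow_le_mul_exp_add_exp_neg hs k u]
    _ = k.factorial / s ^ k * (Real.exp (2 * s * u - Real.exp u) + Real.exp (-Real.exp u)) := by
        rw [mul_assoc, add_mul, ← Real.exp_add, ← Real.exp_add]
        ring_nf
    _ ≤ _ := by
        grw [mul_sub_exp_le (mul_pos two_pos hs) u,
          Real.exp_le_one_iff.2 (neg_nonpos.2 (Real.exp_nonneg u))]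

theorem deriv_exp_mul_sub_exp (s : ℝ) :
    deriv (fun u : ℝ ↦ Real.exp (s * u - Real.exp u)) = fun u ↦
      s * Real.exp (s * u - Real.exp u) - Real.exp ((s + 1) * u - Real.exp u) := by
  ext u
  have h : HasDerivAt (fun u : ℝ ↦ Real.exp (s * u - Real.exp u))
      (Real.exp (s * u - Real.exp u) * (s * 1 - Real.exp u)) u :=
    (((hasDerivAt_id u).const_mul s).sub (Real.hasDerivAt_exp u)).exp
  rw [h.deriv, add_mul, one_mul, add_sub_right_comm, Real.exp_add]
  ring

theorem exists_abs_pow_mul_abs_iteratedDeriv_exp_mul_sub_exp_le (n : ℕ) (hs : 0 < s) (k : ℕ) :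
    ∃ C, ∀ u : ℝ,
      |u| ^ k * |iteratedDeriv n (fun u : ℝ ↦ Real.exp (s * u - Real.exp u)) u| ≤ C := by
  induction n generalizing s with
  | zero => simpa using exists_abs_pow_mul_exp_mul_sub_exp_le hs k
  | succ n ih =>
    obtain ⟨C, hC⟩ := ih hs
    obtain ⟨C', hC'⟩ := ih (add_pos hs one_pos)
    refine ⟨s * C + C', fun u ↦ ?_⟩
    rw [iteratedDeriv_succ', deriv_exp_mul_sub_exp, iteratedDeriv_fun_sub (by fun_prop)
      (by fun_prop), iteratedDeriv_const_mul_field]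
    grw [abs_sub, abs_mul, abs_of_pos hs, mul_add, mul_left_comm, hC, hC']

/-- The kernel `exp (s * u - exp u)`, that is `x ↦ x ^ s * exp (-x)` in the variable `u = log x`,
as a Schwartz function. -/
noncomputable def gammaKernel (s : ℝ) (hs : 0 < s) : 𝓢(ℝ, ℝ) where
  toFun u := Real.exp (s * u - Real.exp u)
  smooth' := by fun_prop
  decay' k n := by
    simpa only [Real.norm_eq_abs, norm_iteratedFDeriv_eq_norm_iteratedDeriv] using
      exists_abs_pow_mul_abs_iteratedDeriv_exp_mul_sub_exp_le n hs k

theorem gammaKernel_apply (hs : 0 < s) (u : ℝ) :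
    gammaKernel s hs u = Real.exp (s * u - Real.exp u) := rfl

theorem integral_gammaKernel (hs : 0 < s) : ∫ u, gammaKernel s hs u = Real.Gamma s := by
  have h := integral_image_eq_integral_abs_deriv_smul MeasurableSet.univ
    (fun u _ ↦ (Real.hasDerivAt_exp u).hasDerivWithinAt) Real.exp_injective.injOn
    fun x ↦ Real.exp (-x) * x ^ (s - 1)
  rw [Set.image_univ, Real.range_exp, ← Real.Gamma_eq_integral hs, setIntegral_univ] at h
  rw [h]
  congr 1
  ext u
  rw [gammaKernel_apply, abs_of_pos (Real.exp_pos u), smul_eq_mul, ← Real.exp_mul, ← Real.exp_add,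
    ← Real.exp_add]
  ring_nf

end GammaKernel

section PrimeExpSum

variable {q : ℕ} {b : ZMod q} {s x : ℝ}

/-- The exponential sum `∑ p ^ (s - 1) * exp (-p * x)` over the primes `p` in the residue class `b`
modulo `q`, with `s` chosen so that it grows like `x ^ (-s) / log (1 / x)` as `x → 0⁺` when `b` is
a unit. -/
noncomputable def primeExpSum (b : ZMod q) (s x : ℝ) : ℝ :=
  ∑' p : ℕ, primeIndicator b p * ((p : ℝ) ^ (s - 1) * Real.exp (-(p * x)))

theorem div_smul_gammaKernel (b : ZMod q) (hs : 0 < s) (hx : 0 < x) (p : ℕ) :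
    (primeIndicator b p / p) • gammaKernel s hs (Real.log p - -Real.log x)
      = x ^ s * (primeIndicator b p * ((p : ℝ) ^ (s - 1) * Real.exp (-(p * x)))) := by
  by_cases hp : p.Prime
  · have hp0 : (0 : ℝ) < p := mod_cast hp.pos
    rw [gammaKernel_apply, sub_neg_eq_add, ← Real.log_mul hp0.ne' hx.ne',
      Real.exp_log (mul_pos hp0 hx), sub_eq_add_neg, Real.exp_add, mul_comm s,
      ← Real.rpow_def_of_pos (mul_pos hp0 hx), Real.mul_rpow hp0.le hx.le,
      Real.rpow_sub_one hp0.ne', smul_eq_mul]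
    ring
  · simp [primeIndicator, hp]

theorem summable_primeExpSum (b : ZMod q) (hs : 0 < s) (hx : 0 < x) :
    Summable fun p : ℕ ↦ primeIndicator b p * ((p : ℝ) ^ (s - 1) * Real.exp (-(p * x))) := by
  rw [← summable_mul_left_iff (Real.rpow_pos_of_pos hx s).ne']
  simpa only [div_smul_gammaKernel b hs hx] using
    (chebyshevBound_primeIndicator b).summable_logMean
      (norm_le_quadraticDecaySeminorm_mul (gammaKernel s hs)) (-Real.log x)

theorem logMean_gammaKernel (b : ZMod q) (hs : 0 < s) (hx : 0 < x) :
    logMean (primeIndicator b) (gammaKernel s hs) (-Real.log x) = x ^ s * primeExpSum b s x := by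
  simp only [logMean, div_smul_gammaKernel b hs hx, tsum_mul_left, primeExpSum]

theorem tendsto_neg_log_nhdsGT_zero : Tendsto (fun x ↦ -Real.log x) (𝓝[>] 0) atTop :=
  tendsto_neg_atBot_atTop.comp Real.tendsto_log_nhdsGT_zero

theorem tendsto_rpow_mul_log_mul_primeExpSum [NeZero q] (hb : IsUnit b) (hs : 0 < s) :
    Tendsto (fun x ↦ x ^ s * -Real.log x * primeExpSum b s x) (𝓝[>] 0)
      (𝓝 ((q.totient : ℝ)⁻¹ * Real.Gamma s)) := by
  rw [← integral_gammaKernel hs]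
  refine ((tendsto_mul_logMean_primeIndicator hb (gammaKernel s hs)).comp
    tendsto_neg_log_nhdsGT_zero).congr' ?_
  filter_upwards [self_mem_nhdsWithin] with x hx
  rw [Function.comp_apply, logMean_gammaKernel b hs hx]
  ring

end PrimeExpSum

theorem fOdd''_exp_neg {x : ℝ} (hx : 0 < x) :
    fOdd'' (Real.exp (-x))
      = Real.exp (2 * x) * (primeExpSum (1 : ZMod 2) 3 x - primeExpSum (1 : ZMod 2) 2 x) := by
  rw [primeExpSum, primeExpSum, ← (summable_primeExpSum 1 three_pos hx).tsum_sub
    (summable_primeExpSum 1 two_pos hx), ← tsum_mul_left]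
  refine tsum_congr fun p ↦ ?_
  by_cases hp : p.Prime ∧ Odd p
  · have hexp : Real.exp (-x) ^ (p - 2) = Real.exp (2 * x) * Real.exp (-(p * x)) := by
      rw [← Real.exp_nat_mul, ← Real.exp_add, Nat.cast_sub hp.1.two_le]
      push_cast
      ring_nf
    have hpow : (p : ℝ) ^ (3 - 1 : ℝ) = p ^ 2 ∧ (p : ℝ) ^ (2 - 1 : ℝ) = p := by norm_num
    simp only [primeIndicator, Set.indicator, Set.mem_ofPred_eq, ZMod.natCast_eq_one_iff_odd, hp,
      and_self, if_true, Pi.one_apply, hexp, hpow]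
    ring
  · simp [primeIndicator, ZMod.natCast_eq_one_iff_odd, hp]

theorem tendsto_fOdd''_exp_neg :
    Tendsto (fun x ↦ fOdd'' (Real.exp (-x)) * (x ^ 3 * -Real.log x)) (𝓝[>] 0) (𝓝 2) := by
  have hid : Tendsto (fun x : ℝ ↦ x) (𝓝[>] 0) (𝓝 0) := nhdsWithin_le_nhds
  have hexp : Tendsto (fun x : ℝ ↦ Real.exp (2 * x)) (𝓝[>] 0) (𝓝 1) := by
    simpa using (hid.const_mul 2).rexp
  have hthree := tendsto_rpow_mul_log_mul_primeExpSum (isUnit_one (M := ZMod 2)) three_pos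
  have htwo := tendsto_rpow_mul_log_mul_primeExpSum (isUnit_one (M := ZMod 2)) two_pos
  have hvalue : 1 * (((2 : ℕ).totient : ℝ)⁻¹ * Real.Gamma 3
      - 0 * (((2 : ℕ).totient : ℝ)⁻¹ * Real.Gamma 2)) = 2 := by
    norm_num [Real.Gamma_ofNat_eq_factorial]
  have hlim := hexp.mul (hthree.sub (hid.mul htwo))
  rw [hvalue] at hlim
  refine hlim.congr' ?_
  filter_upwards [self_mem_nhdsWithin] with x hx
  rw [fOdd''_exp_neg hx, Real.rpow_ofNat, Real.rpow_ofNat]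
  ring

theorem isEquivalent_one_sub_neg_log : (fun z : ℝ ↦ 1 - z) ~[𝓝 1] fun z ↦ -Real.log z := by
  have h : Real.log ~[𝓝 1] fun z ↦ z - 1 := by
    refine IsLittleO.isEquivalent ?_
    simpa [Pi.sub_def] using (Real.hasDerivAt_log one_ne_zero).isLittleO
  simpa using h.symm.neg

theorem tendsto_neg_log_nhdsLT_one : Tendsto (fun z ↦ -Real.log z) (𝓝[<] 1) (𝓝[>] 0) := by
  refine tendsto_nhdsWithin_iff.2 ⟨?_, ?_⟩
  · simpa [Pi.neg_def] using (Real.continuousAt_log one_ne_zero).neg.tendsto.mono_left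
      (nhdsWithin_le_nhds (s := Set.Iio 1))
  · filter_upwards [Ioo_mem_nhdsLT one_pos] with z hz
    exact neg_pos.2 (Real.log_neg hz.1 hz.2)

/-- `f″(z) ~ 2/((1−z)³·log(1/(1−z)))` as `z → 1⁻`. -/
theorem fOdd''_asymptotic :
    Tendsto (fun z : ℝ => fOdd'' z * ((1 - z) ^ 3 * Real.log (1 / (1 - z))))
      (𝓝[<] 1) (𝓝 2) := by
  have hsub : (fun z : ℝ ↦ 1 - z) ~[𝓝[<] 1] fun z ↦ -Real.log z :=
    isEquivalent_one_sub_neg_log.mono nhdsWithin_le_nhds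
  have hlog : (fun z : ℝ ↦ Real.log (1 / (1 - z))) ~[𝓝[<] 1] fun z ↦ -Real.log (-Real.log z) := by
    simpa only [one_div, Pi.inv_apply, Real.log_inv] using
      hsub.inv.log tendsto_neg_log_nhdsLT_one.inv_tendsto_nhdsGT_zero
  have hmain := tendsto_fOdd''_exp_neg.comp tendsto_neg_log_nhdsLT_one
  refine ((IsEquivalent.refl (u := fOdd'')).mul ((hsub.pow 3).mul hlog)).tendsto_nhds_iff.2
    (hmain.congr' ?_)
  filter_upwards [Ioo_mem_nhdsLT one_pos] with z hz
  simp [Real.exp_log hz.1]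
end
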